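/- arXiv:2603.07945 — 2 statements merged into one kernel-verified Lean document; each statement's English description precedes it below -/
import Mathlib

section
/- Let R be a henselian Noetherian local ring whose 𝔪-adic completion is isomorphic to Q/(f₁, …, f_c) for some regular local ring Q and some Q-regular sequence f₁, …, f_c (i.e. R is a henselian local complete intersection), and assume dim R > 0. Let 𝒳 be a resolving subcategory of the category of finitely generated R-modules. Then the following conditions are equivalent: (1) 𝒳 is not contravariantly infinite, i.e. some finitely generated R-module outside 𝒳 admits a right 𝒳-approximation; (2) 𝒳 contains no module M with 0 < pd_R M < ∞; (3) every module in 𝒳 is maximal Cohen–Macaulay. -/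
open CategoryTheory IsLocalRing

universe u

noncomputable section

/-- The `i`-th Ext module of two `R`-modules. -/
abbrev ExtMod (R : Type u) [CommRing R] (i : ℕ) (M N : ModuleCat.{u} R) : ModuleCat R :=
  ((Ext R (ModuleCat.{u} R) i).obj (Opposite.op M)).obj N

/-- Vanishing of the `i`-th Ext module: `Ext_R^i(M, N) = 0`. -/
def ExtVanish (R : Type u) [CommRing R] (i : ℕ) (M N : ModuleCat.{u} R) : Prop :=
  Subsingleton (ExtMod R i M N)

variable (R : Type u) [CommRing R]

/-- `0 → A → B → C → 0` is a short exact sequence. -/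
def IsSES {A B C : ModuleCat.{u} R} (f : A →ₗ[R] B) (g : B →ₗ[R] C) : Prop :=
  Function.Injective f ∧ Function.Exact f g ∧ Function.Surjective g

/-- A resolving subcategory of the category of finitely generated `R`-modules. -/
structure IsResolving (𝒳 : Set (ModuleCat.{u} R)) : Prop where
  finite : ∀ M ∈ 𝒳, Module.Finite R M
  isoClosed : ∀ {M N : ModuleCat.{u} R}, M ∈ 𝒳 → (↥M ≃ₗ[R] ↥N) → N ∈ 𝒳
  freeMem : ∀ M : ModuleCat.{u} R, Module.Finite R M → Module.Free R M → M ∈ 𝒳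
  summandClosed : ∀ M N : ModuleCat.{u} R, ModuleCat.of R (↥M × ↥N) ∈ 𝒳 → M ∈ 𝒳
  extClosed : ∀ (A B C : ModuleCat.{u} R) (f : A →ₗ[R] B) (g : B →ₗ[R] C),
    IsSES R f g → A ∈ 𝒳 → C ∈ 𝒳 → B ∈ 𝒳
  kerClosed : ∀ (A B C : ModuleCat.{u} R) (f : A →ₗ[R] B) (g : B →ₗ[R] C),
    IsSES R f g → B ∈ 𝒳 → C ∈ 𝒳 → A ∈ 𝒳

/-- `f : X → M` is a right `𝒳`-approximation of `M`. -/
def IsRightApprox (𝒳 : Set (ModuleCat.{u} R)) {X M : ModuleCat.{u} R} (f : X →ₗ[R] M) : Prop :=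
  X ∈ 𝒳 ∧ ∀ W ∈ 𝒳, ∀ g : ↥W →ₗ[R] ↥M, ∃ h : ↥W →ₗ[R] ↥X, f ∘ₗ h = g

/-- `M` admits a right `𝒳`-approximation. -/
def HasRightApprox (𝒳 : Set (ModuleCat.{u} R)) (M : ModuleCat.{u} R) : Prop :=
  ∃ (X : ModuleCat.{u} R) (f : X →ₗ[R] M), IsRightApprox R 𝒳 f

/-- `𝒳` is contravariantly infinite: no finitely generated module outside `𝒳` admits
a right `𝒳`-approximation. -/
def ContravariantlyInfinite (𝒳 : Set (ModuleCat.{u} R)) : Prop :=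
  ∀ M : ModuleCat.{u} R, Module.Finite R M → M ∉ 𝒳 → ¬ HasRightApprox R 𝒳 M

/-- `𝒳` is contravariantly finite: every finitely generated module admits
a right `𝒳`-approximation. -/
def ContravariantlyFinite (𝒳 : Set (ModuleCat.{u} R)) : Prop :=
  ∀ M : ModuleCat.{u} R, Module.Finite R M → HasRightApprox R 𝒳 M

/-- The restricted functor `Hom_R(-, C)|_𝒳` is finitely presented, i.e. `C ∈ 𝒞(𝒳)`. -/
def MemCC (𝒳 : Set (ModuleCat.{u} R)) (C : ModuleCat.{u} R) : Prop :=
  ∃ (X₀ X₁ : ModuleCat.{u} R) (g : ↥X₁ →ₗ[R] ↥X₀) (f : ↥X₀ →ₗ[R] ↥C), X₀ ∈ 𝒳 ∧ X₁ ∈ 𝒳 ∧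
    ∀ W ∈ 𝒳, Function.Surjective (fun h : ↥W →ₗ[R] ↥X₀ => f ∘ₗ h) ∧
      Function.Exact (fun h : ↥W →ₗ[R] ↥X₁ => g ∘ₗ h) (fun h : ↥W →ₗ[R] ↥X₀ => f ∘ₗ h)

/-- `𝒳` is coherent: `𝒞(𝒳) = rap 𝒳`. -/
def Coherent (𝒳 : Set (ModuleCat.{u} R)) : Prop :=
  ∀ M : ModuleCat.{u} R, Module.Finite R M → (MemCC R 𝒳 M ↔ HasRightApprox R 𝒳 M)

/-- The right Ext-orthogonal class `𝒳^⊥` of a class `𝒳` of finitely generated modules. -/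
def XPerp (𝒳 : Set (ModuleCat.{u} R)) : Set (ModuleCat.{u} R) :=
  {Y | Module.Finite R Y ∧ ∀ X ∈ 𝒳, ∀ i, 0 < i → ExtVanish R i X Y}

/-- The projective dimension of `M` is at most `n`. -/
def ProjDimLE (M : ModuleCat.{u} R) (n : ℕ) : Prop :=
  ∀ N : ModuleCat.{u} R, ∀ i, n < i → ExtVanish R i M N

/-- The depth of an `R`-module over a local ring: `inf { i | Ext^i(k, M) ≠ 0 }`. -/
def moduleDepth [IsLocalRing R] (M : ModuleCat.{u} R) : ℕ∞ :=
  sInf ((fun i : ℕ => (i : ℕ∞)) ''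
    {i : ℕ | ¬ ExtVanish R i (ModuleCat.of R (ResidueField R)) M})

/-- `M` is a maximal Cohen–Macaulay `R`-module: `depth M ≥ dim R`. -/
def IsMCM [IsLocalRing R] (M : ModuleCat.{u} R) : Prop :=
  ringKrullDim R ≤ (moduleDepth R M : WithBot ℕ∞)

/-- A Gorenstein local ring: `∃ n, Ext^i(M, R) = 0` for every finitely generated `M`
and every `i > n`. -/
def IsGorensteinLocalRing : Prop :=
  ∃ n : ℕ, ∀ M : ModuleCat.{u} R, Module.Finite R M →
    ∀ i, n < i → ExtVanish R i M (ModuleCat.of R R)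

/-- A regular local ring: Noetherian local with `dim R = dim_k 𝔪/𝔪²`. -/
def IsRegularLocal [IsLocalRing R] : Prop :=
  IsNoetherianRing R ∧
    ringKrullDim R = (Module.finrank (ResidueField R) (CotangentSpace R) : ℕ)

/-- Witness that the local ring `R` is a complete intersection: its `𝔪`-adic completion
is `Q/(f₁, …, f_c)` for a regular local ring `Q` and a `Q`-regular sequence `f₁, …, f_c`. -/
structure CompleteIntersectionWitness [IsLocalRing R] : Type (u + 1) where
  Q : Type u
  [commRing : CommRing Q]
  [localRing : IsLocalRing Q]
  regular : IsRegularLocal Q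
  fs : List Q
  regSeq : RingTheory.Sequence.IsRegular Q fs
  equiv : AdicCompletion (maximalIdeal R) R ≃+* Q ⧸ Ideal.span {x : Q | x ∈ fs}

/-- The local ring `R` is a complete intersection. -/
def IsCompleteIntersection [IsLocalRing R] : Prop :=
  Nonempty (CompleteIntersectionWitness R)

end

section
open CategoryTheory IsLocalRing

lemma extVanish_iff_cocycle (R : Type u) [CommRing R] (i : ℕ) (M N : ModuleCat.{u} R)
    (P : ProjectiveResolution M) :
    ExtVanish R i M N ↔ ((P.complex.linearYonedaObj R N).ExactAt i) := by
  unfold ExtVanish ExtMod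
  rw [HomologicalComplex.exactAt_iff_isZero_homology]
  rw [← (P.isoExt (R := R) i N).isZero_iff]
  exact (ModuleCat.isZero_iff_subsingleton).symm

lemma extVanish_succ_iff (R : Type u) [CommRing R] (i : ℕ) (M N : ModuleCat.{u} R)
    (P : ProjectiveResolution M) :
    ExtVanish R (i+1) M N ↔ ∀ f : P.complex.X (i+1) ⟶ N, P.complex.d (i+2) (i+1) ≫ f = 0 →
      ∃ g : P.complex.X i ⟶ N, P.complex.d (i+1) i ≫ g = f := by
  rw [extVanish_iff_cocycle R _ M N P,
    HomologicalComplex.exactAt_iff' _ i (i+1) (i+2) (by simp) (by simp),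
    ShortComplex.moduleCat_exact_iff]
  rfl

lemma extVanish_zero_iff (R : Type u) [CommRing R] (M N : ModuleCat.{u} R)
    (P : ProjectiveResolution M) :
    ExtVanish R 0 M N ↔ ∀ f : P.complex.X 0 ⟶ N, P.complex.d 1 0 ≫ f = 0 → f = 0 := by
  rw [extVanish_iff_cocycle R _ M N P,
    HomologicalComplex.exactAt_iff' _ 0 0 1 (by simp) (by simp),
    ShortComplex.moduleCat_exact_iff]
  have h0 : (P.complex.linearYonedaObj R N).d 0 0 = 0 :=
    HomologicalComplex.shape _ _ _ (by simp)
  constructor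
  · intro h f hf
    obtain ⟨g, hg⟩ := h f hf
    rw [← hg]
    change (P.complex.linearYonedaObj R N).d 0 0 g = 0
    rw [h0]; rfl
  · intro h f hf
    refine ⟨0, ?_⟩
    rw [map_zero]
    exact (h f hf).symm

lemma extVanish_iff (R : Type u) [CommRing R] (i : ℕ) (M N : ModuleCat.{u} R) :
    ExtVanish R i M N ↔ Subsingleton (Abelian.Ext M N i) := by
  let P := projectiveResolution M
  cases i with
  | zero =>
    rw [extVanish_zero_iff R M N P]
    rw [(Abelian.Ext.homEquiv₀ (X := M) (Y := N)).subsingleton_congr]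
    constructor
    · intro h
      refine ⟨fun a b => ?_⟩
      rw [← sub_eq_zero]
      refine (cancel_epi (Z := N) (P.π.f 0) (g := a - b) (h := 0)).1 ?_
      have := h (P.π.f 0 ≫ (a - b)) (by
        have h1 := P.complex_d_comp_π_f_zero
        have h2 := Category.assoc (P.complex.d 1 0) (P.π.f 0) (Z := N) (a - b)
        refine h2.symm.trans ?_
        rw [h1]; exact Limits.zero_comp)
      rw [Limits.comp_zero]; exact this
    · intro h f hf
      have e := P.exact₀
      let g := e.desc f hf
      have : P.π.f 0 ≫ g = f := e.g_desc f hf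
      have hg : g = 0 := h.elim (α := M ⟶ N) g 0
      rw [← this, hg]
      exact Limits.comp_zero
  | succ i =>
    rw [extVanish_succ_iff R i M N P]
    constructor
    · intro h
      refine subsingleton_of_forall_eq 0 fun a => ?_
      obtain ⟨f, hf, rfl⟩ := P.extMk_surjective a (i+2) rfl
      rw [P.extMk_eq_zero_iff f _ _ hf i rfl]
      exact h f hf
    · intro h f hf
      exact (P.extMk_eq_zero_iff f (i+2) rfl hf i rfl).1 (Subsingleton.elim _ _)

lemma projDimLE_iff (R : Type u) [CommRing R] (M : ModuleCat.{u} R) (n : ℕ) :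
    ProjDimLE R M n ↔ HasProjectiveDimensionLE M n := by
  unfold ProjDimLE
  simp only [extVanish_iff]
  constructor
  · intro h
    refine (hasProjectiveDimensionLT_iff M (n+1)).2 fun i hi Y e => ?_
    have := h Y i (by omega)
    exact Subsingleton.elim _ _
  · intro h N i hi
    have : HasProjectiveDimensionLT M (n+1) := h
    exact HasProjectiveDimensionLT.subsingleton M (n+1) i (by omega) N
end

section
open CategoryTheory IsLocalRing

section
variable {R : Type u} [CommRing R]

lemma exists_minimal_cover [IsLocalRing R] (M : Type u) [AddCommGroup M] [Module R M]
    [Module.Finite R M] : ∃ (k : ℕ) (π : (Fin k → R) →ₗ[R] M), Function.Surjective π ∧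
      ∀ z, π z = 0 → ∀ j, z j ∈ maximalIdeal R := by
  classical
  have h := Module.Finite.exists_fin' R M
  obtain ⟨k, ⟨π, hπ⟩, hm⟩ : ∃ k, (∃ f : (Fin k → R) →ₗ[R] M, Function.Surjective f) ∧
      ∀ m < k, ¬ ∃ f : (Fin m → R) →ₗ[R] M, Function.Surjective f :=
    ⟨Nat.find h, Nat.find_spec h, fun m hm => Nat.find_min h hm⟩
  refine ⟨k, π, hπ, ?_⟩
  intro z hz j
  by_contra hj
  have hu : IsUnit (z j) := by simpa using hj
  obtain ⟨w, hw⟩ := hu.exists_left_inv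
  obtain ⟨k', hk'⟩ : ∃ k', k = k' + 1 := ⟨k - 1, by have := j.2; omega⟩
  apply hm k' (by omega)
  subst hk'
  refine ⟨π ∘ₗ (LinearMap.pi (fun i => if h : ∃ l, j.succAbove l = i then LinearMap.proj (R := R) (φ := fun _ => R) h.choose else 0)), ?_⟩
  intro m
  obtain ⟨a, rfl⟩ := hπ m
  let b := a - (a j * w) • z
  have hb : b j = 0 := by
    simp [b, mul_assoc, hw]
  refine ⟨fun l => b (j.succAbove l), ?_⟩
  have : π b = π a := by simp [b, hz]
  rw [← this]
  simp only [LinearMap.comp_apply]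
  congr 1
  ext i
  simp only [LinearMap.pi_apply]
  split_ifs with hi
  · simp only [LinearMap.proj_apply]
    rw [hi.choose_spec]
  · have : i = j := by
      by_contra hne
      exact hi (Fin.exists_succAbove_eq hne)
    rw [this, hb]; rfl

lemma exists_pushout {K F G X : Type u} [AddCommGroup K] [AddCommGroup F] [AddCommGroup G]
    [AddCommGroup X] [Module R K] [Module R F] [Module R G] [Module R X]
    (i : K →ₗ[R] F) (q : F →ₗ[R] G) (hi : Function.Injective i) (hiq : Function.Exact i q)
    (hq : Function.Surjective q) (h : K →ₗ[R] X) :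
    ∃ (P : ModuleCat.{u} R) (jX : X →ₗ[R] P) (jF : F →ₗ[R] P) (p : P →ₗ[R] G),
      Function.Injective jX ∧ Function.Exact jX p ∧ Function.Surjective p ∧
      jF ∘ₗ i = jX ∘ₗ h ∧ p ∘ₗ jF = q ∧ (∀ w : P, ∃ x f, w = jX x + jF f) ∧
      ∀ (M : Type u) [AddCommGroup M] [Module R M] (a : X →ₗ[R] M) (b : F →ₗ[R] M),
        b ∘ₗ i = a ∘ₗ h → ∃ ψ : P →ₗ[R] M, ψ ∘ₗ jX = a ∧ ψ ∘ₗ jF = b := by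
  let D : Submodule R (X × F) := LinearMap.range (h.prod (-i))
  have hD : ∀ k, ((h k, - i k) : X × F) ∈ D := fun k => ⟨k, rfl⟩
  let jX : X →ₗ[R] (X × F) ⧸ D := D.mkQ ∘ₗ LinearMap.inl R X F
  let jF : F →ₗ[R] (X × F) ⧸ D := D.mkQ ∘ₗ LinearMap.inr R X F
  let p : ((X × F) ⧸ D) →ₗ[R] G := D.liftQ (q ∘ₗ LinearMap.snd R X F) (by
    rintro _ ⟨k, rfl⟩
    simp [hiq.apply_apply_eq_zero])
  have hspan : ∀ w : (X × F) ⧸ D, ∃ x f, w = jX x + jF f := by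
    intro w
    obtain ⟨⟨x, f⟩, rfl⟩ := D.mkQ_surjective w
    refine ⟨x, f, ?_⟩
    simp only [jX, jF, LinearMap.comp_apply, ← map_add]
    simp
  have hcomm : jF ∘ₗ i = jX ∘ₗ h := by
    ext k
    simp only [jX, jF, LinearMap.comp_apply]
    rw [← sub_eq_zero, ← map_sub]
    have : LinearMap.inr R X F (i k) - LinearMap.inl R X F (h k) = -(h k, - i k) := by
      ext <;> simp
    rw [this]
    exact (Submodule.Quotient.mk_eq_zero D).2 (D.neg_mem (hD k))
  have hpX : ∀ x, p (jX x) = 0 := fun x => by simp [p, jX]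
  have hpF : ∀ f, p (jF f) = q f := fun x => by simp [p, jF]
  refine ⟨ModuleCat.of R ((X × F) ⧸ D), jX, jF, p, ?_, ?_, ?_, hcomm, ?_, hspan, ?_⟩
  · rw [injective_iff_map_eq_zero]
    intro x hx
    have : ((x, 0) : X × F) ∈ D := (Submodule.Quotient.mk_eq_zero D).1 hx
    obtain ⟨k, hk⟩ := this
    simp only [LinearMap.prod_apply, Function.prod_apply, LinearMap.neg_apply, Prod.mk.injEq, neg_eq_zero] at hk
    have : k = 0 := hi (by simp [hk.2])
    rw [← hk.1, this, map_zero]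
  · intro w
    constructor
    · intro hw
      obtain ⟨x, f, rfl⟩ := hspan w
      rw [map_add, hpX, hpF, zero_add] at hw
      obtain ⟨k, rfl⟩ := (hiq f).1 hw
      refine ⟨x + h k, ?_⟩
      rw [map_add]
      congr 1
      exact (LinearMap.congr_fun hcomm k).symm
    · rintro ⟨x, rfl⟩
      exact hpX x
  · intro g
    obtain ⟨f, rfl⟩ := hq g
    exact ⟨jF f, hpF f⟩
  · ext f; exact hpF f
  · intro M _ _ a b hab
    refine ⟨D.liftQ (a.coprod b) ?_, ?_, ?_⟩
    · rintro _ ⟨k, rfl⟩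
      have := LinearMap.congr_fun hab k
      simp only [LinearMap.comp_apply] at this
      simp [this]
    · ext x; simp [jX]
    · ext x; simp [jF]

end
end

section
open CategoryTheory IsLocalRing

section
variable {R : Type u} [CommRing R]

/-- The short complex attached to an exact pair. -/
abbrev sesOf {A B C : Type u} [AddCommGroup A] [AddCommGroup B] [AddCommGroup C]
    [Module R A] [Module R B] [Module R C] (f : A →ₗ[R] B) (g : B →ₗ[R] C)
    (h : Function.Exact f g) : ShortComplex (ModuleCat.{u} R) where
  X₁ := ModuleCat.of R A
  X₂ := ModuleCat.of R B
  X₃ := ModuleCat.of R C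
  f := ModuleCat.ofHom f
  g := ModuleCat.ofHom g
  zero := by
    ext x
    simpa using h.apply_apply_eq_zero x

lemma sesOf_shortExact {A B C : Type u} [AddCommGroup A] [AddCommGroup B] [AddCommGroup C]
    [Module R A] [Module R B] [Module R C] (f : A →ₗ[R] B) (g : B →ₗ[R] C)
    (hf : Function.Injective f) (h : Function.Exact f g) (hg : Function.Surjective g) :
    (sesOf f g h).ShortExact where
  exact := by
    rw [ShortComplex.ShortExact.moduleCat_exact_iff_function_exact]
    exact h
  mono_f := (ModuleCat.mono_iff_injective _).2 hf
  epi_g := (ModuleCat.epi_iff_surjective _).2 hg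

/-- Projective dimension at most `n`. -/
def PD (R : Type u) [CommRing R] (M : Type u) [AddCommGroup M] [Module R M] (n : ℕ) : Prop :=
  HasProjectiveDimensionLE (ModuleCat.of R M) n

lemma PD.mono {M : Type u} [AddCommGroup M] [Module R M] {n m : ℕ} (h : PD R M n)
    (hnm : n ≤ m) : PD R M m := by
  have : HasProjectiveDimensionLT (ModuleCat.of R M) (n+1) := h
  exact hasProjectiveDimensionLT_of_ge (ModuleCat.of R M) (n+1) (m+1) (by omega)

lemma PD.equiv {M N : Type u} [AddCommGroup M] [Module R M] [AddCommGroup N] [Module R N]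
    {n : ℕ} (h : PD R M n) (e : M ≃ₗ[R] N) : PD R N n := by
  have : HasProjectiveDimensionLE (ModuleCat.of R M) n := h
  exact ModuleCat.hasProjectiveDimensionLE_of_linearEquiv (M := ModuleCat.of R M)
    (N := ModuleCat.of R N) e n

lemma PD.of_free {M : Type u} [AddCommGroup M] [Module R M] [Module.Free R M] (n : ℕ) :
    PD R M n := by
  have h0 : PD R M 0 := by
    have : Projective (ModuleCat.of R M) :=
      (IsProjective.iff_projective M).1 inferInstance
    exact (projective_iff_hasProjectiveDimensionLE_zero _).1 this
  exact h0.mono (Nat.zero_le _)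

lemma PD.free [IsLocalRing R] {M : Type u} [AddCommGroup M] [Module R M]
    [IsNoetherianRing R] [Module.Finite R M] (h : PD R M 0) : Module.Free R M := by
  have : Projective (ModuleCat.of R M) := (projective_iff_hasProjectiveDimensionLE_zero _).2 h
  have : Module.Projective R M := (IsProjective.iff_projective M).2 this
  exact Module.free_of_flat_of_isLocalRing

lemma PD.ses {A B C : Type u} [AddCommGroup A] [AddCommGroup B] [AddCommGroup C]
    [Module R A] [Module R B] [Module R C] (f : A →ₗ[R] B) (g : B →ₗ[R] C)
    (hf : Function.Injective f) (h : Function.Exact f g) (hg : Function.Surjective g)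
    [Module.Free R B] (n : ℕ) : PD R C (n+1) ↔ PD R A n := by
  have hB : Projective (ModuleCat.of R B) := (IsProjective.iff_projective B).1 inferInstance
  exact (sesOf_shortExact f g hf h hg).hasProjectiveDimensionLT_X₃_iff n hB

lemma PD.ker {k : ℕ} {M : Type u} [AddCommGroup M] [Module R M] (π : (Fin k → R) →ₗ[R] M)
    (hπ : Function.Surjective π) (n : ℕ) : PD R M (n+1) ↔ PD R (LinearMap.ker π) n :=
  PD.ses (LinearMap.ker π).subtype π Subtype.val_injective
    (LinearMap.exact_subtype_ker_map π) hπ n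

lemma projDimLE_iff_PD (M : ModuleCat.{u} R) (n : ℕ) : ProjDimLE R M n ↔ PD R M n :=
  projDimLE_iff R M n

variable {𝒳 : Set (ModuleCat.{u} R)}

lemma IsResolving.of_equiv (h : IsResolving R 𝒳) {M N : Type u} [AddCommGroup M] [Module R M]
    [AddCommGroup N] [Module R N] (hM : ModuleCat.of R M ∈ 𝒳) (e : M ≃ₗ[R] N) :
    ModuleCat.of R N ∈ 𝒳 := h.isoClosed hM e

lemma IsResolving.fin_free (h : IsResolving R 𝒳) (k : ℕ) : ModuleCat.of R (Fin k → R) ∈ 𝒳 :=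
  h.freeMem _ (inferInstanceAs (Module.Finite R (Fin k → R)))
    (inferInstanceAs (Module.Free R (Fin k → R)))

lemma IsResolving.ext (h : IsResolving R 𝒳) {A B C : Type u} [AddCommGroup A] [AddCommGroup B]
    [AddCommGroup C] [Module R A] [Module R B] [Module R C] (f : A →ₗ[R] B) (g : B →ₗ[R] C)
    (hf : Function.Injective f) (hfg : Function.Exact f g) (hg : Function.Surjective g)
    (hA : ModuleCat.of R A ∈ 𝒳) (hC : ModuleCat.of R C ∈ 𝒳) : ModuleCat.of R B ∈ 𝒳 :=
  h.extClosed _ _ _ f g ⟨hf, hfg, hg⟩ hA hC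

lemma IsResolving.ker_mem (h : IsResolving R 𝒳) {B C : Type u} [AddCommGroup B]
    [AddCommGroup C] [Module R B] [Module R C] (g : B →ₗ[R] C) (hg : Function.Surjective g)
    (hB : ModuleCat.of R B ∈ 𝒳) (hC : ModuleCat.of R C ∈ 𝒳) :
    ModuleCat.of R (LinearMap.ker g) ∈ 𝒳 :=
  h.kerClosed (ModuleCat.of R (LinearMap.ker g)) _ _ (LinearMap.ker g).subtype g
    ⟨Subtype.val_injective, LinearMap.exact_subtype_ker_map g, hg⟩ hB hC

lemma IsResolving.prod (h : IsResolving R 𝒳) {A C : Type u} [AddCommGroup A]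
    [AddCommGroup C] [Module R A] [Module R C]
    (hA : ModuleCat.of R A ∈ 𝒳) (hC : ModuleCat.of R C ∈ 𝒳) : ModuleCat.of R (A × C) ∈ 𝒳 :=
  h.ext (LinearMap.inl R A C) (LinearMap.snd R A C) LinearMap.inl_injective
    Function.Exact.inl_snd LinearMap.snd_surjective hA hC

lemma IsResolving.pi (h : IsResolving R 𝒳) {A : Type u} [AddCommGroup A] [Module R A]
    (hA : ModuleCat.of R A ∈ 𝒳) (n : ℕ) : ModuleCat.of R (Fin n → A) ∈ 𝒳 := by
  induction n with
  | zero =>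
    exact h.freeMem _ (inferInstanceAs (Module.Finite R (Fin 0 → A)))
      (inferInstanceAs (Module.Free R (Fin 0 → A)))
  | succ n ih =>
    exact h.of_equiv (h.prod hA ih) (Fin.consLinearEquiv R (fun _ => A))

/-- Members of finite positive projective dimension yield one with minimal free syzygy. -/
lemma exists_pd_one [IsNoetherianRing R] [IsLocalRing R] (h : IsResolving R 𝒳) (n : ℕ) :
    ∀ (G : Type u) [AddCommGroup G] [Module R G], ModuleCat.of R G ∈ 𝒳 → PD R G n →
    ¬ Module.Free R G → ∃ (G' : Type u) (_ : AddCommGroup G') (_ : Module R G') (k : ℕ)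
      (π : (Fin k → R) →ₗ[R] G'), ModuleCat.of R G' ∈ 𝒳 ∧ Function.Surjective π ∧
      (∀ z, π z = 0 → ∀ j, z j ∈ maximalIdeal R) ∧ Module.Free R (LinearMap.ker π) ∧
      Nontrivial (LinearMap.ker π) := by
  induction n with
  | zero =>
    intro G _ _ hG hpd hf
    have : Module.Finite R G := h.finite _ hG
    exact absurd hpd.free hf
  | succ n ih =>
    intro G _ _ hG hpd hf
    have : Module.Finite R G := h.finite _ hG
    obtain ⟨k, π, hπ, hmin⟩ := exists_minimal_cover (R := R) G
    have hK : ModuleCat.of R (LinearMap.ker π) ∈ 𝒳 := h.ker_mem π hπ (h.fin_free k) hG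
    by_cases hfree : Module.Free R (LinearMap.ker π)
    · refine ⟨G, inferInstance, inferInstance, k, π, hG, hπ, hmin, hfree, ?_⟩
      by_contra hnt
      rw [not_nontrivial_iff_subsingleton, Submodule.subsingleton_iff_eq_bot] at hnt
      exact hf (Module.Free.of_equiv (LinearEquiv.ofBijective π ⟨LinearMap.ker_eq_bot.1 hnt, hπ⟩))
    · exact ih _ hK ((PD.ker π hπ n).1 hpd) hfree

end
end

section
open CategoryTheory IsLocalRing

section
variable {R : Type u} [CommRing R] {𝒳 : Set (ModuleCat.{u} R)}

lemma contraInf_of_pd [IsNoetherianRing R] [IsLocalRing R] (h : IsResolving R 𝒳) (n : ℕ)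
    (G₀ : Type u) [AddCommGroup G₀] [Module R G₀] (hG₀ : ModuleCat.of R G₀ ∈ 𝒳) (hpd : PD R G₀ n)
    (hnf : ¬ Module.Free R G₀) : ContravariantlyInfinite R 𝒳 := by
  classical
  obtain ⟨G, _, _, k, π, hG, hπ, hmin, hfree, hnt⟩ := exists_pd_one h n G₀ hG₀ hpd hnf
  intro M hM hMX
  rintro ⟨X, f, hX, happ⟩
  apply hMX
  have hXfin : Module.Finite R X := h.finite _ hX
  have hfs : Function.Surjective f := by
    intro m
    have hR : ModuleCat.of R R ∈ 𝒳 := h.freeMem _ (inferInstanceAs (Module.Finite R R))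
      (inferInstanceAs (Module.Free R R))
    obtain ⟨g, hg⟩ := happ _ hR (LinearMap.toSpanSingleton R M m)
    refine ⟨g (1 : R), ?_⟩
    have := LinearMap.congr_fun hg (1 : R)
    simpa using this
  let Y := LinearMap.ker f
  let K := LinearMap.ker π
  obtain ⟨p, c, hpc⟩ : ∃ (p : K →ₗ[R] R) (c : K), p c = 1 := by
    let b := Module.Free.chooseBasis R K
    have hne : Nonempty (Module.Free.ChooseBasisIndex R K) := b.index_nonempty
    obtain ⟨i⟩ := hne
    exact ⟨b.coord i, b i, by simp⟩
  obtain ⟨l, y, hy⟩ := Module.Finite.exists_fin (R := R) (M := Y)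
  let hh : (Fin l → K) →ₗ[R] X :=
    ∑ i, (LinearMap.toSpanSingleton R X (y i : X)) ∘ₗ p ∘ₗ LinearMap.proj i
  have hhval : ∀ z, hh z = ∑ i, p (z i) • (y i : X) := by
    intro z; simp [hh, LinearMap.sum_apply]
  have hex : Function.Exact (K.subtype.compLeft (Fin l)) (π.compLeft (Fin l)) := by
    intro z
    constructor
    · intro hz
      refine ⟨fun i => ⟨z i, congrFun hz i⟩, ?_⟩
      ext i; rfl
    · rintro ⟨w, rfl⟩
      ext i
      exact (w i).2
  obtain ⟨P, jX, jF, pp, hj, hjp, hpp, hc1, hc2, -, huniv⟩ :=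
    exists_pushout (R := R) (K.subtype.compLeft (Fin l)) (π.compLeft (Fin l))
      (fun a b hab => by
        ext i
        have := congrFun hab i
        simp at this
        rw [this]) hex
      (fun g => ⟨fun i => (hπ (g i)).choose, by ext i; exact (hπ (g i)).choose_spec⟩) hh
  have hP : P ∈ 𝒳 := h.extClosed X P (ModuleCat.of R (Fin l → G)) jX pp ⟨hj, hjp, hpp⟩ hX (h.pi hG l)
  have hfh : ∀ z, f (hh z) = 0 := by
    intro z
    rw [hhval, map_sum]
    refine Finset.sum_eq_zero fun i _ => ?_
    rw [map_smul, (y i).2, smul_zero]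
  obtain ⟨g, hg1, hg2⟩ := huniv M f 0 (by
    ext z; simp [hfh])
  obtain ⟨ψ, hψ⟩ := happ P hP g
  let φ : X →ₗ[R] X := ψ ∘ₗ jX
  have hφf : ∀ x, f (φ x) = f x := by
    intro x
    have h1 := LinearMap.congr_fun hψ (jX x)
    have h2 := LinearMap.congr_fun hg1 x
    simp only [LinearMap.comp_apply] at h1 h2
    simp only [φ, LinearMap.comp_apply]
    rw [h1, h2]
  have hψF : ∀ w, ψ (jF w) ∈ Y := by
    intro w
    have h1 := LinearMap.congr_fun hψ (jF w)
    have h2 := LinearMap.congr_fun hg2 w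
    simp only [LinearMap.comp_apply] at h1 h2
    change f _ = 0
    rw [h1, h2]; rfl
  let ψF : (Fin l → Fin k → R) →ₗ[R] Y := (ψ ∘ₗ jF).codRestrict Y hψF
  -- the map one minus phi
  let δ : X →ₗ[R] Y := (LinearMap.id - φ).codRestrict Y (fun x => by
    change f _ = 0
    simp [hφf])
  let u : Y →ₗ[R] Y := δ ∘ₗ Y.subtype
  have hgen : ∀ i, ∃ w : Y, w ∈ (maximalIdeal R) • (⊤ : Submodule R Y) ∧ u (y i) = y i - w := by
    intro i
    let z : Fin l → K := Pi.single i c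
    have hz : hh z = y i := by
      rw [hhval, Finset.sum_eq_single i]
      · simp [z, hpc]
      · intro j _ hji
        have : z j = 0 := by simp [z, hji]
        rw [this, map_zero, zero_smul]
      · intro hi
        exact absurd (Finset.mem_univ i) hi
    refine ⟨ψF ((K.subtype.compLeft (Fin l)) z), ?_, ?_⟩
    · have hmem : (K.subtype.compLeft (Fin l)) z ∈
          (maximalIdeal R) • (⊤ : Submodule R (Fin l → Fin k → R)) := by
        have : (K.subtype.compLeft (Fin l)) z = ∑ j, ((c : Fin k → R) j) • (Pi.single i (Pi.single j 1) : Fin l → Fin k → R) := by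
          ext a b
          simp only [z, LinearMap.compLeft_apply, Function.comp, Finset.sum_apply, Pi.smul_apply]
          by_cases hai : a = i
          · subst hai
            simp [Pi.single_apply]
          · simp [hai]
        rw [this]
        exact Submodule.sum_mem _ fun j _ => Submodule.smul_mem_smul (hmin _ c.2 j) trivial
      have := Submodule.mem_map_of_mem (f := ψF) hmem
      rw [Submodule.map_smul''] at this
      exact Submodule.smul_mono le_rfl le_top this
    · apply Subtype.ext
      simp only [u, δ, LinearMap.comp_apply, LinearMap.codRestrict_apply, Submodule.subtype_apply,
        ψF, LinearMap.sub_apply, LinearMap.id_apply, Submodule.coe_sub, φ]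
      congr 1
      have := LinearMap.congr_fun hc1 z
      simp only [LinearMap.comp_apply] at this
      rw [this, hz]
  have husurj : Function.Surjective u := by
    rw [← LinearMap.range_eq_top]
    apply top_le_iff.1
    apply Submodule.le_of_le_smul_of_le_jacobson_bot (I := maximalIdeal R)
      (Module.Finite.fg_top)
      (IsLocalRing.maximalIdeal_le_jacobson _)
    rw [← hy, Submodule.span_le]
    rintro _ ⟨i, rfl⟩
    obtain ⟨w, hw, hu⟩ := hgen i
    have : y i = u (y i) + w := by rw [hu]; simp
    rw [this, hy]
    exact Submodule.add_mem_sup ⟨_, rfl⟩ hw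
  have hubij : Function.Bijective u :=
    ⟨OrzechProperty.injective_of_surjective_endomorphism u husurj, husurj⟩
  let e := LinearEquiv.ofBijective u hubij
  let r : X →ₗ[R] Y := e.symm.toLinearMap ∘ₗ δ
  have hr : ∀ v : Y, r v = v := by
    intro v
    change e.symm (u v) = v
    exact e.symm_apply_apply v
  have hbij : Function.Bijective (f.prod r) := by
    constructor
    · rw [injective_iff_map_eq_zero]
      intro x hx
      simp only [LinearMap.prod_apply, Function.prod_apply, Prod.mk_eq_zero] at hx
      have := hr ⟨x, hx.1⟩
      simp only [hx.2] at this
      exact (congrArg Subtype.val this).symm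
    · rintro ⟨m, v⟩
      obtain ⟨x, rfl⟩ := hfs m
      refine ⟨x - r x + v, ?_⟩
      have h1 : f ((r x : Y) : X) = 0 := (r x).2
      have h2 : f (v : X) = 0 := v.2
      simp [hr, h1, h2]
  exact h.summandClosed M (ModuleCat.of R Y) (h.isoClosed (N := ModuleCat.of R (M × Y)) hX
    (LinearEquiv.ofBijective _ hbij))

end
end

section
open CategoryTheory IsLocalRing
open scoped Pointwise

section
variable {R : Type u} [CommRing R] [IsLocalRing R]

/-- There is a weakly regular sequence of length `n` in the maximal ideal. -/
def Dep (R : Type u) [CommRing R] [IsLocalRing R] (n : ℕ) (M : Type u) [AddCommGroup M]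
    [Module R M] : Prop :=
  ∃ rs : List R, rs.length = n ∧ (∀ r ∈ rs, r ∈ maximalIdeal R) ∧
    RingTheory.Sequence.IsWeaklyRegular M rs

lemma Dep.zero (M : Type u) [AddCommGroup M] [Module R M] : Dep R 0 M :=
  ⟨[], rfl, by simp, by simp⟩

lemma Dep.equiv {n : ℕ} {M N : Type u} [AddCommGroup M] [Module R M] [AddCommGroup N] [Module R N]
    (h : Dep R n M) (e : M ≃ₗ[R] N) : Dep R n N := by
  obtain ⟨rs, h1, h2, h3⟩ := h
  exact ⟨rs, h1, h2, (e.isWeaklyRegular_congr rs).1 h3⟩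

lemma Dep.succ_iff {n : ℕ} {M : Type u} [AddCommGroup M] [Module R M] :
    Dep R (n+1) M ↔ ∃ x ∈ maximalIdeal R, IsSMulRegular M x ∧ Dep R n (QuotSMulTop x M) := by
  constructor
  · rintro ⟨rs, h1, h2, h3⟩
    match rs, h1 with
    | r :: rs, h1 =>
      rw [RingTheory.Sequence.isWeaklyRegular_cons_iff] at h3
      exact ⟨r, h2 r (by simp), h3.1, rs, by simpa using h1,
        fun s hs => h2 s (by simp [hs]), h3.2⟩
  · rintro ⟨x, hx, hreg, rs, h1, h2, h3⟩
    refine ⟨x :: rs, by simp [h1], ?_, h3.cons hreg⟩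
    intro r hr
    rcases List.mem_cons.1 hr with rfl | hr
    · exact hx
    · exact h2 r hr

lemma Dep.mono {n m : ℕ} {M : Type u} [AddCommGroup M] [Module R M] (h : Dep R n M)
    (hm : m ≤ n) : Dep R m M := by
  obtain ⟨rs, h1, h2, h3⟩ := h
  refine ⟨rs.take m, by simp [h1, hm], fun r hr => h2 r (List.mem_of_mem_take hr), ?_⟩
  rw [← List.take_append_drop m rs, RingTheory.Sequence.isWeaklyRegular_append_iff] at h3
  exact h3.1

variable [IsNoetherianRing R]

lemma support_residue : Module.support R (ResidueField R) =
    PrimeSpectrum.zeroLocus (maximalIdeal R : Set R) := by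
  rw [Module.support_eq_zeroLocus]
  congr 2
  exact Ideal.annihilator_quotient

lemma Dep.of_subsingleton (n : ℕ) (M : Type u) [AddCommGroup M] [Module R M] [Subsingleton M] :
    Dep R n M := by
  induction n generalizing M with
  | zero => exact Dep.zero M
  | succ n ih =>
    rw [Dep.succ_iff]
    exact ⟨0, Submodule.zero_mem _, fun a b _ => Subsingleton.elim _ _, ih _⟩

lemma dep_iff_ext (n : ℕ) (M : Type u) [AddCommGroup M] [Module R M] [Module.Finite R M] :
    Dep R n M ↔ ∀ i < n, Subsingleton
      (Abelian.Ext (ModuleCat.of R (ResidueField R)) (ModuleCat.of R M) i) := by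
  rcases subsingleton_or_nontrivial M with hM | hM
  · have h0 : Limits.IsZero (ModuleCat.of R M) := ModuleCat.isZero_of_subsingleton _
    refine ⟨fun _ i _ => ?_, fun _ => Dep.of_subsingleton n M⟩
    refine subsingleton_of_forall_eq 0 fun e => ?_
    rw [← e.comp_mk₀_id, h0.eq_of_src (𝟙 _) 0, Abelian.Ext.mk₀_zero, Abelian.Ext.comp_zero]
  · have hlt : maximalIdeal R • (⊤ : Submodule R M) < ⊤ := by
      rw [lt_top_iff_ne_top]
      intro h
      exact (top_ne_bot (α := Submodule R M)) (Submodule.eq_bot_of_le_smul_of_le_jacobson_bot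
        (maximalIdeal R) ⊤ Module.Finite.fg_top h.ge (IsLocalRing.maximalIdeal_le_jacobson _))
    have : Module.Finite R (ModuleCat.of R M) := inferInstanceAs (Module.Finite R M)
    have : Module.Finite R (ModuleCat.of R (ResidueField R)) :=
      inferInstanceAs (Module.Finite R (ResidueField R))
    constructor
    · rintro ⟨rs, h1, h2, h3⟩
      rw [← h1]
      refine ModuleCat.subsingleton_ext_of_exists_isRegular (maximalIdeal R) (ModuleCat.of R (ResidueField R)) support_residue.le
        (ModuleCat.of R M) hlt rs h2 ⟨h3, ?_⟩
      intro h
      apply hlt.not_ge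
      refine h.le.trans ?_
      refine Submodule.smul_mono ?_ le_rfl
      rw [Ideal.ofList, Ideal.span_le]
      exact h2
    · intro h
      obtain ⟨rs, h1, h2, h3⟩ := ModuleCat.exists_isRegular_of_exists_subsingleton_ext
        (maximalIdeal R) n (ModuleCat.of R M) hlt (ModuleCat.of R (ResidueField R))
        support_residue h
      exact ⟨rs, h1, h2, h3.1⟩

section ses
variable {N F L : Type u} [AddCommGroup N] [AddCommGroup F] [AddCommGroup L]
  [Module R N] [Module R F] [Module R L] [Module.Finite R N] [Module.Finite R F]
  [Module.Finite R L] (f : N →ₗ[R] F) (g : F →ₗ[R] L)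
    (hf : Function.Injective f) (h : Function.Exact f g) (hg : Function.Surjective g)
include hf h hg

lemma Dep.left (n : ℕ) (hL : Dep R n L) (hF : Dep R (n+1) F) : Dep R (n+1) N := by
  rw [dep_iff_ext] at *
  have hS := sesOf_shortExact f g hf h hg
  intro i hi
  refine subsingleton_of_forall_eq 0 fun e => ?_
  have hi' := hF i hi
  have h0 : e.comp (Abelian.Ext.mk₀ (sesOf f g h).f) (add_zero i) = 0 := hi'.elim _ _
  cases i with
  | zero =>
    have := hS.mono_f
    exact Abelian.Ext.postcomp_mk₀_injective_of_mono _ (sesOf f g h).f (by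
      simpa using h0)
  | succ i =>
    obtain ⟨x, hx⟩ := Abelian.Ext.covariant_sequence_exact₁ _ hS e h0 rfl
    have := (hL i (by omega)).elim x 0
    rw [← hx, this, Abelian.Ext.zero_comp]

lemma Dep.right (n : ℕ) (hN : Dep R (n+1) N) (hF : Dep R n F) : Dep R n L := by
  rw [dep_iff_ext] at *
  have hS := sesOf_shortExact f g hf h hg
  intro i hi
  refine subsingleton_of_forall_eq 0 fun e => ?_
  have h0 : e.comp hS.extClass rfl = 0 := (hN (i+1) (by omega)).elim _ _
  obtain ⟨x, hx⟩ := Abelian.Ext.covariant_sequence_exact₃ _ hS e rfl h0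
  have := (hF i hi).elim x 0
  rw [← hx, this, Abelian.Ext.zero_comp]

lemma Dep.mid (n : ℕ) (hN : Dep R n N) (hL : Dep R n L) : Dep R n F := by
  rw [dep_iff_ext] at *
  have hS := sesOf_shortExact f g hf h hg
  intro i hi
  refine subsingleton_of_forall_eq 0 fun e => ?_
  have h0 : e.comp (Abelian.Ext.mk₀ (sesOf f g h).g) (add_zero i) = 0 := (hL i hi).elim _ _
  obtain ⟨x, hx⟩ := Abelian.Ext.covariant_sequence_exact₂ _ hS e h0
  have := (hN i hi).elim x 0
  rw [← hx, this, Abelian.Ext.zero_comp]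

end ses

lemma Dep.quot_iff {n : ℕ} {M : Type u} [AddCommGroup M] [Module R M] [Module.Finite R M]
    {x : R} (hx : x ∈ maximalIdeal R) (hreg : IsSMulRegular M x) :
    Dep R (n+1) M ↔ Dep R n (QuotSMulTop x M) := by
  constructor
  · intro hM
    refine Dep.right (LinearMap.lsmul R M x) (x • (⊤ : Submodule R M)).mkQ hreg ?_
      (Submodule.mkQ_surjective _) n hM (hM.mono (Nat.le_succ n))
    rw [LinearMap.exact_iff, Submodule.ker_mkQ]
    exact (Submodule.map_top _)
  · intro h
    exact Dep.succ_iff.2 ⟨x, hx, hreg, h⟩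

lemma Dep.pi {n : ℕ} {M : Type u} [AddCommGroup M] [Module R M] [Module.Finite R M]
    (h : Dep R n M) (k : ℕ) : Dep R n (Fin k → M) := by
  induction k with
  | zero => exact Dep.of_subsingleton n _
  | succ k ih =>
    exact (Dep.mid (LinearMap.inl R M (Fin k → M)) (LinearMap.snd R M (Fin k → M))
      LinearMap.inl_injective Function.Exact.inl_snd LinearMap.snd_surjective n h ih).equiv
      (Fin.consLinearEquiv R (fun _ => M))

lemma Dep.ker {n k : ℕ} {M : Type u} [AddCommGroup M] [Module R M] [Module.Finite R M]
    (π : (Fin k → R) →ₗ[R] M) (hπ : Function.Surjective π) (hR : Dep R (n+1) R)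
    (hM : Dep R n M) : Dep R (n+1) (LinearMap.ker π) :=
  Dep.left (LinearMap.ker π).subtype π Subtype.val_injective
    (LinearMap.exact_subtype_ker_map π) hπ n hM (hR.pi k)

lemma Dep.of_ker {n k : ℕ} {M : Type u} [AddCommGroup M] [Module R M] [Module.Finite R M]
    (π : (Fin k → R) →ₗ[R] M) (hπ : Function.Surjective π) (hR : Dep R n R)
    (hK : Dep R (n+1) (LinearMap.ker π)) : Dep R n M :=
  Dep.right (LinearMap.ker π).subtype π Subtype.val_injective
    (LinearMap.exact_subtype_ker_map π) hπ n hK (hR.pi k)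

lemma Dep.le_dim {n : ℕ} (h : Dep R n R) : (n : WithBot ℕ∞) ≤ ringKrullDim R := by
  obtain ⟨rs, h1, h2, h3⟩ := h
  have hr : RingTheory.Sequence.IsRegular R rs := ⟨h3, by
    intro h
    have : (1 : R) ∈ Ideal.ofList rs • (⊤ : Submodule R R) := by rw [← h]; trivial
    rw [smul_eq_mul, Ideal.mul_top] at this
    have hle : Ideal.ofList rs ≤ maximalIdeal R := by
      rw [Ideal.ofList, Ideal.span_le]; exact h2
    exact (Ideal.ne_top_iff_one _).1 (maximalIdeal.isMaximal R).ne_top (hle this)⟩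
  rw [← ringKrullDim_add_length_eq_ringKrullDim_of_isRegular rs hr, h1]
  have : Nontrivial (R ⧸ Ideal.ofList rs) := by
    rw [Ideal.Quotient.nontrivial_iff]
    intro h
    exact hr.2 (by rw [h]; simp)
  have h0 : 0 ≤ ringKrullDim (R ⧸ Ideal.ofList rs) := ringKrullDim_nonneg_of_nontrivial
  calc (n : WithBot ℕ∞) = 0 + n := by simp
    _ ≤ _ := add_le_add_left h0 _

end
end

section
open CategoryTheory IsLocalRing TensorProduct

section
variable {A B : Type u} [CommRing A] [IsLocalRing A] [CommRing B] [IsLocalRing B] [Algebra A B]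

lemma map_mem_maximalIdeal_of_surj (hs : Function.Surjective (algebraMap A B)) {x : A} :
    algebraMap A B x ∈ maximalIdeal B ↔ x ∈ maximalIdeal A := by
  have : IsLocalHom (algebraMap A B) := IsLocalHom.of_surjective (algebraMap A B) hs
  rw [mem_maximalIdeal, mem_maximalIdeal, mem_nonunits_iff, mem_nonunits_iff,
    isUnit_map_iff (algebraMap A B)]

lemma dep_iff_of_surj (hs : Function.Surjective (algebraMap A B)) (n : ℕ) (M : Type u)
    [AddCommGroup M] [Module A M] [Module B M] [IsScalarTower A B M] :
    Dep A n M ↔ Dep B n M := by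
  constructor
  · rintro ⟨rs, h1, h2, h3⟩
    refine ⟨rs.map (algebraMap A B), by simpa using h1, ?_, ?_⟩
    · intro r hr
      obtain ⟨a, ha, rfl⟩ := List.mem_map.1 hr
      exact (map_mem_maximalIdeal_of_surj hs).2 (h2 a ha)
    · exact (RingTheory.Sequence.isWeaklyRegular_map_algebraMap_iff B M rs).2 h3
  · rintro ⟨rs, h1, h2, h3⟩
    obtain ⟨rs, rfl⟩ := (List.map_surjective_iff (f := algebraMap A B)).2 hs rs
    refine ⟨rs, by simpa using h1, ?_,
      (RingTheory.Sequence.isWeaklyRegular_map_algebraMap_iff B M rs).1 h3⟩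
    intro r hr
    exact (map_mem_maximalIdeal_of_surj hs).1 (h2 _ (List.mem_map.2 ⟨r, hr, rfl⟩))

end

section
variable {R S : Type u} [CommRing R] [IsLocalRing R] [CommRing S] [IsLocalRing S] [Algebra R S]
  [Module.Flat R S] [IsLocalHom (algebraMap R S)]

lemma one_tmul_injective (M : Type u) [AddCommGroup M] [Module R M] (v : M)
    (hv : (1 : S) ⊗ₜ[R] v = 0) : v = 0 := by
  have : Module.FaithfullyFlat R S := Module.FaithfullyFlat.of_flat_of_isLocalHom
  have := Module.FaithfullyFlat.tensorProduct_mk_injective (A := R) (B := S) M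
  exact this (by simpa using hv)

variable [IsNoetherianRing R]

lemma Dep.baseChange {n : ℕ} {M : Type u} [AddCommGroup M] [Module R M] (h : Dep R n M) :
    Dep S n (S ⊗[R] M) := by
  obtain ⟨rs, h1, h2, h3⟩ := h
  refine ⟨rs.map (algebraMap R S), by simpa using h1, ?_,
    h3.of_flat_of_isBaseChange (TensorProduct.isBaseChange R M S)⟩
  intro r hr
  obtain ⟨a, ha, rfl⟩ := List.mem_map.1 hr
  exact map_nonunit (algebraMap R S) a (h2 a ha)

lemma Dep.of_baseChange (hm : (maximalIdeal R).map (algebraMap R S) = maximalIdeal S)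
    [IsNoetherianRing S] {n : ℕ} {M : Type u} [AddCommGroup M] [Module R M] [Module.Finite R M]
    (h : Dep S n (S ⊗[R] M)) : Dep R n M := by
  induction n generalizing M with
  | zero => exact Dep.zero M
  | succ n ih =>
    have hex : ∃ x ∈ maximalIdeal R, IsSMulRegular M x := by
      by_contra hne
      have hann : Module.annihilator R (ResidueField R) = maximalIdeal R :=
        Ideal.annihilator_quotient
      rw [← hann, ← IsSMulRegular.subsingleton_linearMap_iff,
        not_subsingleton_iff_nontrivial] at hne
      obtain ⟨g, hg⟩ := exists_ne (0 : ResidueField R →ₗ[R] M)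
      have : ∃ a, g a ≠ 0 := by
        by_contra hcon
        push Not at hcon
        exact hg (LinearMap.ext hcon)
      obtain ⟨a, ha⟩ := this
      have hkill : ∀ r ∈ maximalIdeal R, r • g a = 0 := by
        intro r hr
        rw [← map_smul]
        rw [← hann, Module.mem_annihilator] at hr
        rw [hr, map_zero]
      obtain ⟨y, hy, hyreg, -⟩ := Dep.succ_iff.1 h
      have hy0 : y • ((1 : S) ⊗ₜ[R] g a) = 0 := by
        rw [← hm] at hy
        refine Submodule.span_induction (p := fun y _ => y • ((1 : S) ⊗ₜ[R] g a) = 0)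
          ?_ ?_ ?_ ?_ hy
        · rintro _ ⟨r, hr, rfl⟩
          rw [algebraMap_smul, ← TensorProduct.tmul_smul, hkill r hr, TensorProduct.tmul_zero]
        · simp
        · intro b c _ _ hb hc
          rw [add_smul, hb, hc, add_zero]
        · intro s b _ hb
          rw [smul_assoc, hb, smul_zero]
      have : (1 : S) ⊗ₜ[R] g a = 0 := hyreg (by simpa using hy0)
      exact ha (one_tmul_injective M _ this)
    obtain ⟨x, hx, hreg⟩ := hex
    refine Dep.succ_iff.2 ⟨x, hx, hreg, ih ?_⟩
    have hx' : algebraMap R S x ∈ maximalIdeal S := map_nonunit (algebraMap R S) x hx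
    have hreg' : IsSMulRegular (S ⊗[R] M) (algebraMap R S x) :=
      hreg.of_flat_of_isBaseChange (TensorProduct.isBaseChange R M S)
    exact ((Dep.quot_iff hx' hreg').1 h).equiv
      (QuotSMulTop.algebraMapTensorEquivTensorQuotSMulTop x M S)

end
end

section
open CategoryTheory IsLocalRing TensorProduct
open scoped Pointwise

section
/-- Regular of dimension `n`, with chosen number of generators. -/
def RegGen (Q : Type u) [CommRing Q] [IsLocalRing Q] (n : ℕ) : Prop :=
  ringKrullDim Q = n ∧ ∃ g : Fin n → Q, Ideal.span (Set.range g) = maximalIdeal Q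

variable {Q : Type u} [CommRing Q] [IsLocalRing Q] [IsNoetherianRing Q]

lemma exists_avoid (s : Set (Ideal Q)) (hs : s.Finite) (hp : ∀ p ∈ s, p.IsPrime)
    (hne : ∀ p ∈ s, ¬ maximalIdeal Q ≤ p) (h2 : ¬ maximalIdeal Q ≤ maximalIdeal Q ^ 2) :
    ∃ x ∈ maximalIdeal Q, x ∉ maximalIdeal Q ^ 2 ∧ ∀ p ∈ s, x ∉ p := by
  classical
  by_contra hcon
  push Not at hcon
  let t : Finset (Ideal Q) := insert (maximalIdeal Q ^ 2) hs.toFinset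
  have := (Ideal.subset_union_prime (s := t) (f := fun i => i) (maximalIdeal Q ^ 2)
    (maximalIdeal Q ^ 2) (fun i hi h1 _ => by
      rcases Finset.mem_insert.1 hi with h | h
      · exact absurd h h1
      · exact hp i (hs.mem_toFinset.1 h)) (I := maximalIdeal Q)).1 (by
      intro x hx
      by_cases hx2 : x ∈ maximalIdeal Q ^ 2
      · exact Set.mem_iUnion₂.2 ⟨_, by simp [t], hx2⟩
      · obtain ⟨p, hps, hxp⟩ := hcon x hx hx2
        exact Set.mem_iUnion₂.2 ⟨p, by simp [t, hps], hxp⟩)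
  obtain ⟨i, hi, hle⟩ := this
  rcases Finset.mem_insert.1 hi with h | h
  · exact h2 (h ▸ hle)
  · exact hne i (hs.mem_toFinset.1 h) hle

lemma not_le_sq {n : ℕ} (h : RegGen Q (n+1)) : ¬ maximalIdeal Q ≤ maximalIdeal Q ^ 2 := by
  intro hle
  have : maximalIdeal Q = ⊥ := by
    refine Submodule.eq_bot_of_le_smul_of_le_jacobson_bot (maximalIdeal Q) (maximalIdeal Q)
      (IsNoetherian.noetherian _) ?_ (IsLocalRing.maximalIdeal_le_jacobson _)
    rwa [smul_eq_mul, ← pow_two]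
  have hf : IsField Q := IsLocalRing.isField_iff_maximalIdeal_eq.2 this
  have h0 := ringKrullDim_eq_zero_of_isField hf
  have h1 := h.1
  rw [h0] at h1
  norm_cast at h1

instance quot_isLocal {x : Q} [hx : Fact (x ∈ maximalIdeal Q)] : IsLocalRing (Q ⧸ Ideal.span {x}) := by
  have : Nontrivial (Q ⧸ Ideal.span {x}) := by
    rw [Ideal.Quotient.nontrivial_iff]
    intro h
    have hle : Ideal.span {x} ≤ maximalIdeal Q := by
      rw [Ideal.span_le]; simpa using hx.1
    exact (maximalIdeal.isMaximal Q).ne_top (top_le_iff.1 (h ▸ hle))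
  exact IsLocalRing.of_surjective' (Ideal.Quotient.mk (Ideal.span {x})) Ideal.Quotient.mk_surjective

lemma dep_quot_iff' {x : Q} [hx : Fact (x ∈ maximalIdeal Q)] {n : ℕ} (M : Type u) [AddCommGroup M]
    [Module Q M] [Module.Finite Q M] (hreg : IsSMulRegular M x) :
    Dep Q (n+1) M ↔ Dep (Q ⧸ Ideal.span {x}) n (QuotSMulTop x M) := by
  rw [Dep.quot_iff hx.1 hreg]
  exact dep_iff_of_surj Ideal.Quotient.mk_surjective n _

lemma quot_self_equiv (x : Q) : Nonempty ((Q ⧸ Ideal.span {x}) ≃ₗ[Q] QuotSMulTop x Q) := by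
  have h : Ideal.span {x} = x • (⊤ : Ideal Q) := by simp [← Submodule.ideal_span_singleton_smul]
  exact ⟨Submodule.quotEquivOfEq _ _ h⟩

lemma RegGen.quot {n : ℕ} (h : RegGen Q (n+1)) {x : Q} [hx : Fact (x ∈ maximalIdeal Q)]
    (hx2 : x ∉ maximalIdeal Q ^ 2) : RegGen (Q ⧸ Ideal.span {x}) n := by
  obtain ⟨hd, g, hg⟩ := h
  have hmap : maximalIdeal (Q ⧸ Ideal.span {x}) =
      (maximalIdeal Q).map (Ideal.Quotient.mk (Ideal.span {x})) := by
    ext y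
    obtain ⟨y, rfl⟩ := Ideal.Quotient.mk_surjective y
    have h1 := map_mem_maximalIdeal_of_surj (A := Q) (B := Q ⧸ Ideal.span {x})
      Ideal.Quotient.mk_surjective (x := y)
    change Ideal.Quotient.mk _ y ∈ _ ↔ _ at h1
    rw [h1]
    constructor
    · exact fun h => Ideal.mem_map_of_mem _ h
    · intro h
      rw [Ideal.mem_map_iff_of_surjective _ Ideal.Quotient.mk_surjective] at h
      obtain ⟨z, hz, hzy⟩ := h
      rw [Ideal.Quotient.eq] at hzy
      have hle : Ideal.span {x} ≤ maximalIdeal Q := by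
        rw [Ideal.span_le]; simpa using hx.1
      have := Ideal.sub_mem _ hz (hle hzy)
      simpa using this
  -- generators
  have hgen : ∃ g' : Fin n → Q ⧸ Ideal.span {x}, Ideal.span (Set.range g') = maximalIdeal _ := by
    have hx1 := hx.1
    rw [← hg, Ideal.mem_span_range_iff_exists_fun] at hx1
    obtain ⟨c, hc⟩ := hx1
    have hgm : ∀ i, g i ∈ maximalIdeal Q := fun i => by
      rw [← hg]; exact Ideal.subset_span ⟨i, rfl⟩
    obtain ⟨j, hj⟩ : ∃ j, IsUnit (c j) := by
      by_contra hcon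
      push Not at hcon
      apply hx2
      rw [← hc, pow_two]
      exact Ideal.sum_mem _ fun i _ => Ideal.mul_mem_mul (hcon i) (hgm i)
    refine ⟨fun i => Ideal.Quotient.mk _ (g (j.succAbove i)), ?_⟩
    rw [hmap, ← hg, Ideal.map_span]
    apply le_antisymm
    · rw [Ideal.span_le]
      rintro _ ⟨i, rfl⟩
      exact Ideal.subset_span ⟨_, ⟨_, rfl⟩, rfl⟩
    · rw [Ideal.span_le]
      rintro _ ⟨_, ⟨i, rfl⟩, rfl⟩
      by_cases hij : i = j
      · subst hij
        obtain ⟨w, hw⟩ := hj.exists_left_inv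
        have : Ideal.Quotient.mk (Ideal.span {x}) (g i) =
            - ∑ l, Ideal.Quotient.mk (Ideal.span {x}) (w * c (i.succAbove l)) *
              Ideal.Quotient.mk (Ideal.span {x}) (g (i.succAbove l)) := by
          have h0 : Ideal.Quotient.mk (Ideal.span {x}) (w * ∑ i, c i * g i) = 0 := by
            rw [hc, Ideal.Quotient.eq_zero_iff_mem]
            exact Ideal.mul_mem_left _ _ (Ideal.mem_span_singleton_self x)
          rw [Fin.sum_univ_succAbove _ i, mul_add, ← mul_assoc, hw, one_mul, map_add,
            Finset.mul_sum, map_sum] at h0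
          rw [eq_neg_iff_add_eq_zero, ← h0]
          congr 1
          refine Finset.sum_congr rfl fun l _ => ?_
          rw [← map_mul, mul_assoc]
        rw [this]
        exact Ideal.neg_mem_iff _ |>.2 (Ideal.sum_mem _ fun l _ =>
          Ideal.mul_mem_left _ _ (Ideal.subset_span ⟨l, rfl⟩))
      · obtain ⟨l, rfl⟩ := Fin.exists_succAbove_eq hij
        exact Ideal.subset_span ⟨l, rfl⟩
  refine ⟨?_, hgen⟩
  apply le_antisymm
  · refine (ringKrullDim_le_spanFinrank_maximalIdeal _).trans ?_
    obtain ⟨g', hg'⟩ := hgen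
    rw [← hg']
    have h1 := Submodule.spanFinrank_span_le_ncard_of_finite (R := Q ⧸ Ideal.span {x})
      (Set.finite_range g')
    have h2 : (Set.range g').ncard ≤ n := by
      rw [← Set.image_univ]
      refine (Set.ncard_image_le).trans ?_
      simp
    exact_mod_cast h1.trans h2
  · have h1 := ringKrullDim_le_ringKrullDim_quotSMulTop_succ hx.1
    have h : Ideal.span {x} = x • (⊤ : Ideal Q) := by simp [← Submodule.ideal_span_singleton_smul]
    rw [← ringKrullDim_eq_of_ringEquiv (Ideal.quotientEquivAlgOfEq Q h).toRingEquiv, hd] at h1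
    push_cast at h1
    have hcancel : ∀ a : WithBot ℕ∞, (n : WithBot ℕ∞) + 1 ≤ a + 1 → (n : WithBot ℕ∞) ≤ a := by
      intro a ha
      induction a with
      | bot => 
        exfalso
        rw [WithBot.bot_add, le_bot_iff] at ha
        exact absurd ha (by exact_mod_cast WithBot.coe_ne_bot)
      | coe a =>
        have : ((n : ℕ∞) : WithBot ℕ∞) + ((1 : ℕ∞) : WithBot ℕ∞) ≤ (a : WithBot ℕ∞) + ((1 : ℕ∞) : WithBot ℕ∞) := ha
        rw [← WithBot.coe_add, ← WithBot.coe_add, WithBot.coe_le_coe] at this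
        exact_mod_cast (ENat.add_le_add_iff_right (by simp)).1 this
    exact hcancel _ h1

lemma RegGen.isField (h : RegGen Q 0) : IsField Q := by
  obtain ⟨_, g, hg⟩ := h
  rw [IsLocalRing.isField_iff_maximalIdeal_eq, ← hg]
  simp

end
end

section
open CategoryTheory IsLocalRing TensorProduct
open scoped Pointwise

section

lemma RegGen.isDomain (n : ℕ) : ∀ (Q : Type u) [CommRing Q] [IsLocalRing Q] [IsNoetherianRing Q],
    RegGen Q n → IsDomain Q := by
  induction n with
  | zero =>
    intro Q _ _ _ h
    exact h.isField.isDomain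
  | succ n ih =>
    intro Q _ _ _ h
    have h2 := not_le_sq h
    obtain ⟨x, hx, hx2, hav⟩ := exists_avoid (Q := Q) (minimalPrimes Q)
      (minimalPrimes.finite_of_isNoetherianRing Q) (fun p hp => hp.1.1) (by
        intro p hp hle
        have hpm : p = maximalIdeal Q :=
          le_antisymm (IsLocalRing.le_maximalIdeal hp.1.1.ne_top) hle
        have hz : (maximalIdeal Q).height = 0 := by
          rw [← hpm]
          have := hp.1.1
          exact Ideal.height_eq_zero_iff.2 hp
        have h1 := h.1
        rw [← IsLocalRing.maximalIdeal_height_eq_ringKrullDim, hz] at h1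
        norm_cast at h1) h2
    have : Fact (x ∈ maximalIdeal Q) := ⟨hx⟩
    have hdom := ih _ (h.quot hx2)
    have hprime : (Ideal.span {x}).IsPrime := (Ideal.Quotient.isDomain_iff_prime _).1 hdom
    obtain ⟨p, hp, hpx⟩ := Ideal.exists_minimalPrimes_le (I := (⊥ : Ideal Q)) (J := Ideal.span {x}) bot_le
    have hpp : p.IsPrime := hp.1.1
    have hpbot : p = ⊥ := by
      refine Submodule.eq_bot_of_le_smul_of_le_jacobson_bot (maximalIdeal Q) p
        (IsNoetherian.noetherian _) ?_ (IsLocalRing.maximalIdeal_le_jacobson _)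
      intro y hy
      obtain ⟨z, rfl⟩ := Ideal.mem_span_singleton'.1 (hpx hy)
      rcases hpp.mem_or_mem hy with hz | hz
      · rw [mul_comm]
        exact Submodule.smul_mem_smul hx hz
      · exact absurd hz (hav p hp)
    rw [hpbot] at hpp
    exact (IsDomain.of_bot_isPrime Q)

lemma RegGen.main (n : ℕ) : ∀ (Q : Type u) [CommRing Q] [IsLocalRing Q] [IsNoetherianRing Q],
    RegGen Q n → Dep Q n Q ∧ ∀ (N : Type u) [AddCommGroup N] [Module Q N] [Module.Finite Q N],
      Dep Q n N → Module.Free Q N := by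
  induction n with
  | zero =>
    intro Q _ _ _ h
    refine ⟨Dep.zero Q, fun N _ _ _ _ => ?_⟩
    let := h.isField.toField
    exact Module.Free.of_divisionRing Q N
  | succ n ih =>
    intro Q _ _ _ h
    have hdom := RegGen.isDomain (n+1) Q h
    have h2 := not_le_sq h
    constructor
    · obtain ⟨x, hx, hx2, -⟩ := exists_avoid (Q := Q) ∅ Set.finite_empty (by simp) (by simp) h2
      have : Fact (x ∈ maximalIdeal Q) := ⟨hx⟩
      have hx0 : x ≠ 0 := fun h => hx2 (h ▸ Submodule.zero_mem _)
      have hreg : IsSMulRegular Q x := fun a b hab => mul_left_cancel₀ hx0 hab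
      obtain ⟨e⟩ := quot_self_equiv x
      refine Dep.succ_iff.2 ⟨x, hx, hreg, Dep.equiv ?_ e⟩
      exact (dep_iff_of_surj (A := Q) (B := Q ⧸ Ideal.span {x}) Ideal.Quotient.mk_surjective n
        (Q ⧸ Ideal.span {x})).2 (ih _ (h.quot hx2)).1
    · intro N _ _ _ hN
      obtain ⟨y, hy, hyreg, -⟩ := Dep.succ_iff.1 hN
      have hU := biUnion_associatedPrimes_eq_compl_regular Q N
      obtain ⟨x, hx, hx2, hav⟩ := exists_avoid (Q := Q) (associatedPrimes Q N)
        (associatedPrimes.finite Q N) (fun p hp => hp.isPrime) (by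
          intro p hp hle
          have : y ∈ ⋃ p ∈ associatedPrimes Q N, (p : Set Q) :=
            Set.mem_iUnion₂.2 ⟨p, hp, hle hy⟩
          rw [hU] at this
          exact this hyreg) h2
      have : Fact (x ∈ maximalIdeal Q) := ⟨hx⟩
      have hreg : IsSMulRegular N x := by
        by_contra hcon
        have : x ∈ ⋃ p ∈ associatedPrimes Q N, (p : Set Q) := by
          rw [hU]; exact hcon
        obtain ⟨p, hp, hxp⟩ := Set.mem_iUnion₂.1 this
        exact hav p hp hxp
      have h3 := (dep_quot_iff' N hreg).1 hN
      have : Module.Finite (Q ⧸ Ideal.span {x}) (QuotSMulTop x N) :=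
        Module.Finite.of_restrictScalars_finite Q _ _
      have hfr := (ih _ (h.quot hx2)).2 (QuotSMulTop x N) h3
      have hfp : Module.FinitePresentation Q N := Module.finitePresentation_of_finite Q N
      exact (Module.free_quotSMulTop_iff_free (R := Q) (M := N) (IsLocalRing.maximalIdeal_le_jacobson _ hx) hreg).1 hfr

lemma RegGen.pd (n : ℕ) (Q : Type u) [CommRing Q] [IsLocalRing Q] [IsNoetherianRing Q]
    (h : RegGen Q n) (M : Type u) [AddCommGroup M] [Module Q M] [Module.Finite Q M] : PD Q M n := by
  obtain ⟨hQ, hfree⟩ := RegGen.main n Q h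
  have key : ∀ (k m : ℕ) (M : Type u) [AddCommGroup M] [Module Q M] [Module.Finite Q M],
      m + k = n → Dep Q m M → PD Q M k := by
    intro k
    induction k with
    | zero =>
      intro m M _ _ _ hm hM
      have hmn : m = n := by simpa using hm
      subst hmn
      have := hfree M hM
      exact PD.of_free 0
    | succ k ih =>
      intro m M _ _ _ hm hM
      obtain ⟨l, π, hπ⟩ := Module.Finite.exists_fin' Q M
      rw [PD.ker π hπ]
      exact ih (m+1) _ (by omega) (Dep.ker π hπ (hQ.mono (by omega)) hM)
  exact key n 0 M (by simp) (Dep.zero M)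

lemma RegGen.of_isRegularLocal (Q : Type u) [CommRing Q] [IsLocalRing Q] (h : IsRegularLocal Q) :
    ∃ n, IsNoetherianRing Q ∧ RegGen Q n := by
  obtain ⟨h1, h2⟩ := h
  refine ⟨_, h1, h2, ?_⟩
  rw [← spanFinrank_maximalIdeal_eq_finrank_cotangentSpace]
  let I := maximalIdeal Q
  have hI : I.FG := IsNoetherian.noetherian I
  obtain ⟨s, hs, hspan⟩ := Submodule.FG.exists_span_finset_card_eq_spanFinrank hI
  change ∃ g : Fin I.spanFinrank → Q, Ideal.span (Set.range g) = I
  rw [← hs]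
  refine ⟨fun i => (s.equivFin.symm i : Q), ?_⟩
  rw [← hspan]
  congr 1
  ext y
  constructor
  · rintro ⟨i, rfl⟩
    exact (s.equivFin.symm i).2
  · intro hy
    exact ⟨s.equivFin ⟨y, hy⟩, by simp⟩

lemma RegGen.of_ringEquiv {Q Q' : Type u} [CommRing Q] [IsLocalRing Q] [CommRing Q']
    [IsLocalRing Q'] (e : Q ≃+* Q') {n : ℕ} (h : RegGen Q n) : RegGen Q' n := by
  obtain ⟨h1, g, hg⟩ := h
  refine ⟨by rw [← ringKrullDim_eq_of_ringEquiv e, h1], e ∘ g, ?_⟩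
  rw [Set.range_comp, ← IsLocalRing.map_ringEquiv_maximalIdeal e, ← hg, Ideal.map_span]

end
end

section
open CategoryTheory IsLocalRing
open scoped Pointwise
section

/-- Extend scalars of a linear map along a surjective ring map. -/
def extS {A B : Type u} [CommRing A] [CommRing B] [Algebra A B]
    (hs : Function.Surjective (algebraMap A B)) {M N : Type u} [AddCommGroup M] [AddCommGroup N]
    [Module A M] [Module A N] [Module B M] [Module B N] [IsScalarTower A B M]
    [IsScalarTower A B N] (g : M →ₗ[A] N) : M →ₗ[B] N where
  toFun := g
  map_add' := g.map_add
  map_smul' := by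
    intro b x
    obtain ⟨a, rfl⟩ := hs b
    simp

/-- Extend scalars of a linear equivalence along a surjective ring map. -/
def extSE {A B : Type u} [CommRing A] [CommRing B] [Algebra A B]
    (hs : Function.Surjective (algebraMap A B)) {M N : Type u} [AddCommGroup M] [AddCommGroup N]
    [Module A M] [Module A N] [Module B M] [Module B N] [IsScalarTower A B M]
    [IsScalarTower A B N] (g : M ≃ₗ[A] N) : M ≃ₗ[B] N :=
  { extS hs g.toLinearMap, g.toEquiv with }

structure PreRes (A : Type u) [CommRing A] (C : Set (ModuleCat.{u} A)) : Prop where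
  finite : ∀ M ∈ C, Module.Finite A M
  iso : ∀ {M N : ModuleCat.{u} A}, M ∈ C → (↥M ≃ₗ[A] ↥N) → N ∈ C
  ext : ∀ (X Y Z : ModuleCat.{u} A) (f : X →ₗ[A] Y) (g : Y →ₗ[A] Z),
    Function.Injective f → Function.Exact f g → Function.Surjective g → X ∈ C → Z ∈ C → Y ∈ C
  syz : ∀ M ∈ C, ∃ (k : ℕ) (π : (Fin k → A) →ₗ[A] M), Function.Surjective π ∧
    ModuleCat.of A (LinearMap.ker π) ∈ C

def EP (A : Type u) [CommRing A] (N : Type u) [AddCommGroup N] [Module A N] : Prop :=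
  ∀ (k : ℕ) (π : (Fin k → A) →ₗ[A] N), Function.Surjective π →
    ∀ φ : LinearMap.ker π →ₗ[A] A, ∃ ψ : (Fin k → A) →ₗ[A] A, ∀ x, ψ x.1 = φ x

structure GP (A : Type u) [CommRing A] [IsLocalRing A] (n : ℕ) : Prop where
  noeth : IsNoetherianRing A
  dep : Dep A n A
  i : ∀ C : Set (ModuleCat.{u} A), PreRes A C →
    (∀ M ∈ C, (∃ m, PD A M m) → Module.Free A M) → ∀ M ∈ C, Dep A n M
  ii : ∀ (N : Type u) [AddCommGroup N] [Module A N] [Module.Finite A N], Dep A n N → EP A N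

lemma EP.of_free {A : Type u} [CommRing A] {N : Type u} [AddCommGroup N] [Module A N]
    [Module.Free A N] : EP A N := by
  intro k π hπ φ
  obtain ⟨s, hs⟩ := Module.projective_lifting_property π LinearMap.id hπ
  have hs' : ∀ y, π (s y) = y := fun y => LinearMap.congr_fun hs y
  let p : (Fin k → A) →ₗ[A] LinearMap.ker π :=
    (LinearMap.id - s ∘ₗ π).codRestrict _ (by intro c; simp [hs'])
  refine ⟨φ ∘ₗ p, fun x => ?_⟩
  have : p x.1 = x := by
    ext1
    simp [p, LinearMap.mem_ker.1 x.2]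
  simp [this]

lemma GP.of_regGen {Q : Type u} [CommRing Q] [IsLocalRing Q] [IsNoetherianRing Q] {n : ℕ}
    (h : RegGen Q n) : GP Q n where
  noeth := inferInstance
  dep := (RegGen.main n Q h).1
  i := by
    intro C hC hfree M hM
    have := hC.finite M hM
    have := hfree M hM ⟨n, RegGen.pd n Q h M⟩
    have e := Module.finBasis Q M
    exact ((RegGen.main n Q h).1.pi _).equiv e.equivFun.symm
  ii := by
    intro N _ _ _ hN
    have := (RegGen.main n Q h).2 N hN
    exact EP.of_free

lemma EP.lift {A : Type u} [CommRing A] {N : Type u} [AddCommGroup N] [Module A N]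
    [Module.Finite A N] (h : EP A N) {x : A} (hx : IsSMulRegular A x)
    (g : N →ₗ[A] A ⧸ Ideal.span {x}) :
    ∃ φ : N →ₗ[A] A, ∀ y, Ideal.Quotient.mk (Ideal.span {x}) (φ y) = g y := by
  obtain ⟨k, π, hπ⟩ := Module.Finite.exists_fin' A N
  obtain ⟨G, hG⟩ := Module.projective_lifting_property
    (Submodule.mkQ (Ideal.span {x})) (g ∘ₗ π) (Submodule.mkQ_surjective _)
  have hG' : ∀ z, Ideal.Quotient.mk (Ideal.span {x}) (G z) = g (π z) := fun z =>
    LinearMap.congr_fun hG z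
  let m : A →ₗ[A] A := LinearMap.lsmul A A x
  have hm : Function.Injective m := hx
  have hr : ∀ z : LinearMap.ker π, (G ∘ₗ (LinearMap.ker π).subtype) z ∈ LinearMap.range m := by
    intro z
    have h1 := hG' z.1
    rw [LinearMap.mem_ker.1 z.2, map_zero, Ideal.Quotient.eq_zero_iff_mem,
      Ideal.mem_span_singleton] at h1
    obtain ⟨c, hc⟩ := h1
    exact ⟨c, by simp [m, hc]⟩
  let φ₀ : LinearMap.ker π →ₗ[A] A := (LinearEquiv.ofInjective m hm).symm.toLinearMap ∘ₗ
    (G ∘ₗ (LinearMap.ker π).subtype).codRestrict _ hr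
  have hφ₀ : ∀ z : LinearMap.ker π, x * φ₀ z = G z.1 := by
    intro z
    have : m (φ₀ z) = G z.1 := by
      have := LinearEquiv.apply_symm_apply (LinearEquiv.ofInjective m hm)
        ((G ∘ₗ (LinearMap.ker π).subtype).codRestrict _ hr z)
      exact congrArg Subtype.val this
    exact this
  obtain ⟨ψ, hψ⟩ := h k π hπ φ₀
  have hk : LinearMap.ker π ≤ LinearMap.ker (G - x • ψ) := by
    intro z hz
    have h1 := hφ₀ ⟨z, hz⟩
    have h2 := hψ ⟨z, hz⟩
    simp only [LinearMap.mem_ker, LinearMap.sub_apply, LinearMap.smul_apply, smul_eq_mul]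
    simp only at h1 h2
    rw [h2, h1, sub_self]
  let φ := (LinearMap.ker π).liftQ (G - x • ψ) hk ∘ₗ (π.quotKerEquivOfSurjective hπ).symm.toLinearMap
  refine ⟨φ, fun y => ?_⟩
  obtain ⟨z, rfl⟩ := hπ y
  have : φ (π z) = G z - x * ψ z := by
    have h1 : (π.quotKerEquivOfSurjective hπ).symm (π z) = Submodule.Quotient.mk z := by
      rw [LinearEquiv.symm_apply_eq]; rfl
    simp only [φ, LinearMap.comp_apply, LinearEquiv.coe_coe, h1]
    rfl
  rw [this, map_sub, hG', sub_eq_self, Ideal.Quotient.eq_zero_iff_mem]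
  exact Ideal.mul_mem_right _ _ (Ideal.mem_span_singleton_self x)

variable {A : Type u} [CommRing A] {f : A}

lemma qsurj (f : A) : Function.Surjective (algebraMap A (A ⧸ Ideal.span {f})) :=
  Ideal.Quotient.mk_surjective

lemma mk_eq_zero_iff {N : Type u} [AddCommGroup N] [Module A N] (x : N) :
    (Submodule.Quotient.mk x : QuotSMulTop f N) = 0 ↔ ∃ u, x = f • u := by
  rw [Submodule.Quotient.mk_eq_zero, Submodule.mem_smul_pointwise_iff_exists]
  constructor
  · rintro ⟨u, -, h⟩; exact ⟨u, h.symm⟩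
  · rintro ⟨u, h⟩; exact ⟨u, trivial, h.symm⟩

/-- Reduction of a map. -/
def redMap (f : A) {M N : Type u} [AddCommGroup M] [AddCommGroup N] [Module A M] [Module A N]
    (g : M →ₗ[A] N) : QuotSMulTop f M →ₗ[A ⧸ Ideal.span {f}] QuotSMulTop f N :=
  extS (qsurj f) (QuotSMulTop.map f g)

lemma redMap_mk {M N : Type u} [AddCommGroup M] [AddCommGroup N] [Module A M] [Module A N]
    (g : M →ₗ[A] N) (x : M) :
    redMap f g (Submodule.Quotient.mk x) = Submodule.Quotient.mk (g x) := rfl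

lemma redMap_ses {X Y Z : Type u} [AddCommGroup X] [AddCommGroup Y] [AddCommGroup Z]
    [Module A X] [Module A Y] [Module A Z] (a : X →ₗ[A] Y) (b : Y →ₗ[A] Z)
    (ha : Function.Injective a) (hab : Function.Exact a b) (hb : Function.Surjective b)
    (hZ : IsSMulRegular Z f) :
    Function.Injective (redMap f a) ∧ Function.Exact (redMap f a) (redMap f b) ∧
      Function.Surjective (redMap f b) := by
  refine ⟨?_, ?_, ?_⟩
  · rw [injective_iff_map_eq_zero]
    intro x
    obtain ⟨x, rfl⟩ := Submodule.Quotient.mk_surjective _ x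
    rw [redMap_mk, mk_eq_zero_iff, mk_eq_zero_iff]
    rintro ⟨y, hy⟩
    have h0 : f • b y = f • 0 := by
      rw [← map_smul, ← hy, smul_zero]; exact hab.apply_apply_eq_zero x
    obtain ⟨u, hu⟩ := (hab y).1 (hZ h0)
    exact ⟨u, ha (by rw [hy, ← hu, map_smul])⟩
  · intro y
    obtain ⟨y, rfl⟩ := Submodule.Quotient.mk_surjective _ y
    rw [redMap_mk, mk_eq_zero_iff]
    constructor
    · rintro ⟨z, hz⟩
      obtain ⟨w, rfl⟩ := hb z
      obtain ⟨u, hu⟩ := (hab (y - f • w)).1 (by rw [map_sub, map_smul, hz, sub_self])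
      refine ⟨Submodule.Quotient.mk u, ?_⟩
      rw [redMap_mk, hu, Submodule.Quotient.mk_sub, sub_eq_self, mk_eq_zero_iff]
      exact ⟨w, rfl⟩
    · rintro ⟨x, hx⟩
      obtain ⟨x, rfl⟩ := Submodule.Quotient.mk_surjective _ x
      rw [redMap_mk, Eq.comm, ← sub_eq_zero, ← Submodule.Quotient.mk_sub, mk_eq_zero_iff] at hx
      obtain ⟨u, hu⟩ := hx
      refine ⟨b u, ?_⟩
      rw [← map_smul, ← hu, map_sub, hab.apply_apply_eq_zero, sub_zero]
  · intro z
    obtain ⟨z, rfl⟩ := Submodule.Quotient.mk_surjective _ z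
    obtain ⟨y, rfl⟩ := hb z
    exact ⟨Submodule.Quotient.mk y, rfl⟩

lemma redEquiv {L Z : Type u} [AddCommGroup L] [Module A L] [AddCommGroup Z] [Module A Z]
    [Module (A ⧸ Ideal.span {f}) Z] [IsScalarTower A (A ⧸ Ideal.span {f}) Z]
    (p : L →ₗ[A] Z) (hp : Function.Surjective p) (hk : ∀ x, p x = 0 → ∃ u, x = f • u) :
    Nonempty (QuotSMulTop f L ≃ₗ[A ⧸ Ideal.span {f}] Z) := by
  have hle : f • (⊤ : Submodule A L) = LinearMap.ker p := by
    ext x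
    rw [Submodule.mem_smul_pointwise_iff_exists, LinearMap.mem_ker]
    constructor
    · rintro ⟨u, -, rfl⟩
      rw [map_smul, algebra_compatible_smul (A ⧸ Ideal.span {f}) f]
      have : algebraMap A (A ⧸ Ideal.span {f}) f = 0 :=
        Ideal.Quotient.eq_zero_iff_mem.2 (Ideal.mem_span_singleton_self f)
      rw [this, zero_smul]
    · intro h
      obtain ⟨u, rfl⟩ := hk x h
      exact ⟨u, trivial, rfl⟩
  exact ⟨extSE (qsurj f) ((Submodule.quotEquivOfEq _ _ hle) ≪≫ₗ p.quotKerEquivOfSurjective hp)⟩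

lemma PD.red [IsLocalRing A] [IsNoetherianRing A] (hA : IsSMulRegular A f) (n : ℕ) :
    ∀ (N : Type u) [AddCommGroup N] [Module A N] [Module.Finite A N], IsSMulRegular N f →
    PD A N n → PD (A ⧸ Ideal.span {f}) (QuotSMulTop f N) n := by
  induction n with
  | zero =>
    intro N _ _ _ hN h
    have := h.free
    exact PD.of_free 0
  | succ n ih =>
    intro N _ _ _ hN h
    obtain ⟨k, π, hπ⟩ := Module.Finite.exists_fin' A N
    have h1 := (PD.ker π hπ n).1 h
    have hF : IsSMulRegular (Fin k → A) f := IsSMulRegular.pi fun _ => hA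
    have h2 := ih (LinearMap.ker π) (hF.submodule _ _) h1
    obtain ⟨ha, hb, hc⟩ := redMap_ses (f := f) (LinearMap.ker π).subtype π Subtype.val_injective
      (LinearMap.exact_subtype_ker_map π) hπ hN
    exact (PD.ses _ _ ha hb hc n).2 h2

end
end

section
open CategoryTheory IsLocalRing
open scoped Pointwise
section
variable {A : Type u} [CommRing A] {f : A}

/-- coordinatewise reduction -/
def qk (f : A) (k : ℕ) : (Fin k → A) →ₗ[A] (Fin k → A ⧸ Ideal.span {f}) :=
  (Algebra.linearMap A (A ⧸ Ideal.span {f})).compLeft (Fin k)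

lemma qk_surj (f : A) (k : ℕ) : Function.Surjective (qk f k) := by
  intro z
  choose w hw using fun i => qsurj f (z i)
  exact ⟨w, funext hw⟩

lemma qk_ker {k : ℕ} {x : Fin k → A} (h : qk f k x = 0) : ∃ u, x = f • u := by
  have : ∀ i, ∃ c, x i = f * c := by
    intro i
    have h1 : Ideal.Quotient.mk (Ideal.span {f}) (x i) = 0 := congrFun h i
    rwa [Ideal.Quotient.eq_zero_iff_mem, Ideal.mem_span_singleton] at h1
  choose u hu using this
  exact ⟨u, funext hu⟩

lemma f_smul_eq_zero {Z : Type u} [AddCommGroup Z] [Module A Z]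
    [Module (A ⧸ Ideal.span {f}) Z] [IsScalarTower A (A ⧸ Ideal.span {f}) Z] (z : Z) :
    f • z = 0 := by
  rw [algebra_compatible_smul (A ⧸ Ideal.span {f}) f]
  have : algebraMap A (A ⧸ Ideal.span {f}) f = 0 :=
    Ideal.Quotient.eq_zero_iff_mem.2 (Ideal.mem_span_singleton_self f)
  rw [this, zero_smul]

/-- The lifted class -/
def liftC (f : A) (C : Set (ModuleCat.{u} (A ⧸ Ideal.span {f}))) : Set (ModuleCat.{u} A) :=
  {N | Module.Finite A N ∧ IsSMulRegular N f ∧ ModuleCat.of (A ⧸ Ideal.span {f}) (QuotSMulTop f N) ∈ C}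

variable {C : Set (ModuleCat.{u} (A ⧸ Ideal.span {f}))}

lemma liftC_preRes [IsLocalRing A] [IsNoetherianRing A] (hf : f ∈ maximalIdeal A)
    (hA : IsSMulRegular A f) (hC : PreRes _ C) : PreRes A (liftC f C) where
  finite := fun M h => h.1
  iso := by
    rintro M N ⟨h1, h2, h3⟩ e
    refine ⟨Module.Finite.equiv e, e.symm.isSMulRegular_congr f |>.2 h2, hC.iso h3 ?_⟩
    exact extSE (qsurj f) (QuotSMulTop.congr f e)
  ext := by
    rintro X Y Z a b ha hab hb ⟨h1, h2, h3⟩ ⟨h4, h5, h6⟩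
    refine ⟨?_, ?_, ?_⟩
    · have := hab
      exact Module.Finite.of_exact hab hb
    · exact isSMulRegular_of_range_eq_ker ha (LinearMap.exact_iff.1 hab).symm h2 h5
    · obtain ⟨p, q, r⟩ := redMap_ses a b ha hab hb h5
      exact hC.ext _ _ _ (redMap f a) (redMap f b) p q r h3 h6
  syz := by
    rintro N ⟨h1, h2, h3⟩
    obtain ⟨k, πb, hπb, hk⟩ := hC.syz _ h3
    change (Fin k → A ⧸ Ideal.span {f}) →ₗ[A ⧸ Ideal.span {f}] QuotSMulTop f N at πb
    obtain ⟨π, hπ⟩ := Module.projective_lifting_property (Submodule.mkQ (f • (⊤ : Submodule A N)))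
      (πb.restrictScalars A ∘ₗ qk f k) (Submodule.mkQ_surjective _)
    have hπ' : ∀ z, (Submodule.Quotient.mk (π z) : QuotSMulTop f N) = πb (qk f k z) :=
      fun z => LinearMap.congr_fun hπ z
    have hs : Function.Surjective π := by
      rw [← LinearMap.range_eq_top, eq_top_iff]
      refine Submodule.le_of_le_smul_of_le_jacobson_bot (I := maximalIdeal A)
        (Module.Finite.fg_top) (IsLocalRing.maximalIdeal_le_jacobson _) ?_
      intro y _
      obtain ⟨z, hz⟩ := hπb (Submodule.Quotient.mk y)
      obtain ⟨w, rfl⟩ := qk_surj f k z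
      rw [← hπ', Eq.comm, ← sub_eq_zero, ← Submodule.Quotient.mk_sub, mk_eq_zero_iff] at hz
      obtain ⟨u, hu⟩ := hz
      rw [sub_eq_iff_eq_add'] at hu
      rw [hu]
      exact Submodule.add_mem_sup ⟨w, rfl⟩ (Submodule.smul_mem_smul hf trivial)
    have hF : IsSMulRegular (Fin k → A) f := IsSMulRegular.pi fun _ => hA
    refine ⟨k, π, hs, inferInstanceAs (Module.Finite A (LinearMap.ker π)), hF.submodule _ _, ?_⟩
    let p : LinearMap.ker π →ₗ[A] LinearMap.ker πb :=
      LinearMap.codRestrict ((LinearMap.ker πb).restrictScalars A)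
        (qk f k ∘ₗ (LinearMap.ker π).subtype) (by
          intro z
          have := hπ' z.1
          rw [LinearMap.mem_ker.1 z.2, Submodule.Quotient.mk_zero] at this
          exact this.symm)
    have hp : ∀ z, (p z).1 = qk f k z.1 := fun z => rfl
    obtain ⟨e⟩ := redEquiv (f := f) p (by
      rintro ⟨z, hz⟩
      obtain ⟨w, rfl⟩ := qk_surj f k z
      have h4 := hπ' w
      rw [LinearMap.mem_ker.1 hz, mk_eq_zero_iff] at h4
      obtain ⟨u, hu⟩ := h4
      obtain ⟨v, rfl⟩ := hs u
      refine ⟨⟨w - f • v, by simp [hu]⟩, ?_⟩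
      ext1
      rw [hp]
      simp [f_smul_eq_zero]) (by
      intro z hz
      have h4 : qk f k z.1 = 0 := by rw [← hp, hz]; rfl
      obtain ⟨u, hu⟩ := qk_ker h4
      have h5 : f • π u = f • 0 := by
        rw [← map_smul, ← hu, smul_zero]; exact z.2
      exact ⟨⟨u, h2 h5⟩, Subtype.ext hu⟩)
    exact hC.iso hk e.symm

/-- restriction of reduction to kernels -/
def kq {k : ℕ} {M : Type u} [AddCommGroup M] [Module A M]
    [Module (A ⧸ Ideal.span {f}) M] [IsScalarTower A (A ⧸ Ideal.span {f}) M]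
    (πb : (Fin k → A ⧸ Ideal.span {f}) →ₗ[A ⧸ Ideal.span {f}] M) :
    LinearMap.ker (πb.restrictScalars A ∘ₗ qk f k) →ₗ[A] LinearMap.ker πb where
  toFun z := ⟨qk f k z.1, z.2⟩
  map_add' x y := by ext1; simp
  map_smul' a x := by ext1; simp

lemma kq_val {k : ℕ} {M : Type u} [AddCommGroup M] [Module A M]
    [Module (A ⧸ Ideal.span {f}) M] [IsScalarTower A (A ⧸ Ideal.span {f}) M]
    (πb : (Fin k → A ⧸ Ideal.span {f}) →ₗ[A ⧸ Ideal.span {f}] M) (z) : (kq πb z).1 = qk f k z.1 := rfl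

lemma kq_surj {k : ℕ} {M : Type u} [AddCommGroup M] [Module A M]
    [Module (A ⧸ Ideal.span {f}) M] [IsScalarTower A (A ⧸ Ideal.span {f}) M]
    (πb : (Fin k → A ⧸ Ideal.span {f}) →ₗ[A ⧸ Ideal.span {f}] M) : Function.Surjective (kq πb) := by
  rintro ⟨z, hz⟩
  obtain ⟨w, rfl⟩ := qk_surj f k z
  exact ⟨⟨w, hz⟩, rfl⟩

/-- multiplication by `f` into the kernel -/
def kj {k : ℕ} {M : Type u} [AddCommGroup M] [Module A M]
    [Module (A ⧸ Ideal.span {f}) M] [IsScalarTower A (A ⧸ Ideal.span {f}) M]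
    (πb : (Fin k → A ⧸ Ideal.span {f}) →ₗ[A ⧸ Ideal.span {f}] M) :
    (Fin k → A) →ₗ[A] LinearMap.ker (πb.restrictScalars A ∘ₗ qk f k) where
  toFun u := ⟨f • u, by rw [LinearMap.mem_ker, map_smul, f_smul_eq_zero]⟩
  map_add' x y := by ext1; simp
  map_smul' a x := by ext1; exact smul_comm f a x

lemma kj_val {k : ℕ} {M : Type u} [AddCommGroup M] [Module A M]
    [Module (A ⧸ Ideal.span {f}) M] [IsScalarTower A (A ⧸ Ideal.span {f}) M]
    (πb : (Fin k → A ⧸ Ideal.span {f}) →ₗ[A ⧸ Ideal.span {f}] M) (u) : (kj πb u).1 = f • u := rfl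

lemma kq_kj {k : ℕ} {M : Type u} [AddCommGroup M] [Module A M]
    [Module (A ⧸ Ideal.span {f}) M] [IsScalarTower A (A ⧸ Ideal.span {f}) M]
    (πb : (Fin k → A ⧸ Ideal.span {f}) →ₗ[A ⧸ Ideal.span {f}] M) (u) : kq πb (kj πb u) = 0 := by
  ext1
  rw [kq_val, kj_val, map_smul, f_smul_eq_zero]
  rfl

lemma mid_ses (hA : IsSMulRegular A f) {k : ℕ} {M : Type u} [AddCommGroup M] [Module A M]
    [Module (A ⧸ Ideal.span {f}) M] [IsScalarTower A (A ⧸ Ideal.span {f}) M]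
    (πb : (Fin k → A ⧸ Ideal.span {f}) →ₗ[A ⧸ Ideal.span {f}] M) (hπb : Function.Surjective πb) :
    ∃ (i : M →ₗ[A ⧸ Ideal.span {f}] QuotSMulTop f (LinearMap.ker (πb.restrictScalars A ∘ₗ qk f k)))
      (q : QuotSMulTop f (LinearMap.ker (πb.restrictScalars A ∘ₗ qk f k)) →ₗ[A ⧸ Ideal.span {f}]
        LinearMap.ker πb), Function.Injective i ∧ Function.Exact i q ∧ Function.Surjective q := by
  set π := πb.restrictScalars A ∘ₗ qk f k with hπdef
  have hπ : Function.Surjective π := hπb.comp (qk_surj f k)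
  have hF : IsSMulRegular (Fin k → A) f := IsSMulRegular.pi fun _ => hA
  let P : QuotSMulTop f (LinearMap.ker π) →ₗ[A] LinearMap.ker πb :=
    Submodule.liftQ _ (kq πb) (by
      intro x hx
      rw [Submodule.mem_smul_pointwise_iff_exists] at hx
      obtain ⟨u, -, rfl⟩ := hx
      rw [LinearMap.mem_ker, map_smul]
      ext1
      exact f_smul_eq_zero (f := f) (kq πb u).1)
  have hP : ∀ z, P (Submodule.Quotient.mk z) = kq πb z := fun z => rfl
  let I₀ : (Fin k → A) →ₗ[A] QuotSMulTop f (LinearMap.ker π) := Submodule.mkQ _ ∘ₗ kj πb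
  have hI₀ : ∀ u, I₀ u = Submodule.Quotient.mk (kj πb u) := fun u => rfl
  have hk : LinearMap.ker π = LinearMap.ker I₀ := by
    ext u
    rw [LinearMap.mem_ker (f := I₀), hI₀, mk_eq_zero_iff]
    constructor
    · intro hu
      exact ⟨⟨u, hu⟩, rfl⟩
    · rintro ⟨v, hv⟩
      have h1 : f • u = f • v.1 := congrArg Subtype.val hv
      have h2 : u = v.1 := hF h1
      rw [h2]; exact v.2
  let I : M →ₗ[A] QuotSMulTop f (LinearMap.ker π) :=
    Submodule.liftQ _ I₀ hk.le ∘ₗ (π.quotKerEquivOfSurjective hπ).symm.toLinearMap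
  have hI : ∀ u, I (π u) = I₀ u := by
    intro u
    have h1 : (π.quotKerEquivOfSurjective hπ).symm (π u) = Submodule.Quotient.mk u := by
      rw [LinearEquiv.symm_apply_eq]; rfl
    simp only [I, LinearMap.comp_apply, LinearEquiv.coe_coe, h1]
    rfl
  refine ⟨extS (qsurj f) I, extS (qsurj f) P, ?_, ?_, ?_⟩
  · change Function.Injective I
    rw [injective_iff_map_eq_zero]
    intro m hm
    obtain ⟨u, rfl⟩ := hπ m
    rw [hI, ← LinearMap.mem_ker, ← hk] at hm
    exact hm
  · change Function.Exact I P
    intro z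
    obtain ⟨z, rfl⟩ := Submodule.Quotient.mk_surjective _ z
    rw [hP]
    constructor
    · intro hz
      have h2 : qk f k z.1 = 0 := by rw [← kq_val, hz]; rfl
      obtain ⟨u, hu⟩ := qk_ker h2
      refine ⟨π u, ?_⟩
      rw [hI, hI₀]
      congr 1
      ext1
      rw [kj_val, hu]
    · rintro ⟨m, hm⟩
      obtain ⟨u, rfl⟩ := hπ m
      rw [hI, hI₀] at hm
      rw [← hP, ← hm, hP, kq_kj]
  · change Function.Surjective P
    intro y
    obtain ⟨z, rfl⟩ := kq_surj πb y
    exact ⟨Submodule.Quotient.mk z, rfl⟩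

lemma ep_red (hA : IsSMulRegular A f) [IsNoetherianRing A] {k : ℕ} {M : Type u} [AddCommGroup M] [Module A M]
    [Module (A ⧸ Ideal.span {f}) M] [IsScalarTower A (A ⧸ Ideal.span {f}) M]
    (πb : (Fin k → A ⧸ Ideal.span {f}) →ₗ[A ⧸ Ideal.span {f}] M)
    (h2 : EP A (LinearMap.ker (πb.restrictScalars A ∘ₗ qk f k)))
    (g : LinearMap.ker πb →ₗ[A ⧸ Ideal.span {f}] A ⧸ Ideal.span {f}) :
    ∃ ψ : (Fin k → A ⧸ Ideal.span {f}) →ₗ[A ⧸ Ideal.span {f}] A ⧸ Ideal.span {f},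
      ∀ x, ψ x.1 = g x := by
  obtain ⟨φ, hφ⟩ := h2.lift hA (g.restrictScalars A ∘ₗ kq πb)
  let m : A →ₗ[A] A := LinearMap.lsmul A A f
  have hm : Function.Injective m := hA
  have hr : ∀ u, (φ ∘ₗ kj πb) u ∈ LinearMap.range m := by
    intro u
    have h3 := hφ (kj πb u)
    have h4 := kq_kj πb u
    rw [LinearMap.comp_apply, h4, map_zero, Ideal.Quotient.eq_zero_iff_mem,
      Ideal.mem_span_singleton] at h3
    obtain ⟨c, hc⟩ := h3
    exact ⟨c, by simp [m, hc]⟩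
  let ψ : (Fin k → A) →ₗ[A] A := (LinearEquiv.ofInjective m hm).symm.toLinearMap ∘ₗ
    (φ ∘ₗ kj πb).codRestrict _ hr
  have hψ : ∀ u, f * ψ u = φ (kj πb u) := by
    intro u
    have : m (ψ u) = φ (kj πb u) := by
      have := LinearEquiv.apply_symm_apply (LinearEquiv.ofInjective m hm)
        ((φ ∘ₗ kj πb).codRestrict _ hr u)
      exact congrArg Subtype.val this
    exact this
  have hψφ : ∀ z : LinearMap.ker (πb.restrictScalars A ∘ₗ qk f k), ψ z.1 = φ z := by
    intro z
    apply hA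
    change f * _ = f • _
    rw [hψ, ← map_smul]
    rfl
  have hle : LinearMap.ker (qk f k) ≤ LinearMap.ker (Submodule.mkQ (Ideal.span {f}) ∘ₗ ψ) := by
    intro z hz
    obtain ⟨u, rfl⟩ := qk_ker (LinearMap.mem_ker.1 hz)
    rw [LinearMap.mem_ker, map_smul, f_smul_eq_zero]
  let ψb : (Fin k → A ⧸ Ideal.span {f}) →ₗ[A] A ⧸ Ideal.span {f} :=
    Submodule.liftQ _ (Submodule.mkQ (Ideal.span {f}) ∘ₗ ψ) hle ∘ₗ
      ((qk f k).quotKerEquivOfSurjective (qk_surj f k)).symm.toLinearMap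
  have hψb : ∀ z, ψb (qk f k z) = Ideal.Quotient.mk _ (ψ z) := by
    intro z
    have h1 : ((qk f k).quotKerEquivOfSurjective (qk_surj f k)).symm (qk f k z) =
        Submodule.Quotient.mk z := by
      rw [LinearEquiv.symm_apply_eq]; rfl
    simp only [ψb, LinearMap.comp_apply, LinearEquiv.coe_coe, h1]
    rfl
  refine ⟨extS (qsurj f) ψb, ?_⟩
  rintro ⟨z, hz⟩
  obtain ⟨w, rfl⟩ := qk_surj f k z
  change ψb (qk f k w) = _
  rw [hψb]
  have h3 := hφ ⟨w, hz⟩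
  rw [← hψφ] at h3
  exact h3


lemma GP.step [IsLocalRing A] [hfm : Fact (f ∈ maximalIdeal A)]
    (hA : IsSMulRegular A f) {n : ℕ} (h : GP A (n+1)) : GP (A ⧸ Ideal.span {f}) n := by
  have := h.noeth
  have hF : ∀ k, IsSMulRegular (Fin k → A) f := fun k => IsSMulRegular.pi fun _ => hA
  have hdep : Dep A n A := h.dep.mono (Nat.le_succ n)
  refine ⟨inferInstance, ?_, ?_, ?_⟩
  · obtain ⟨e⟩ := quot_self_equiv f
    have h1 := ((Dep.quot_iff hfm.1 hA).1 h.dep).equiv e.symm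
    exact (dep_iff_of_surj (qsurj f) n _).1 h1
  · intro C hC hfree M hM
    have hC' := liftC_preRes hfm.1 hA hC
    have key := h.i _ hC' (by
      rintro N ⟨h1, h2, h3⟩ ⟨m, hm⟩
      have h4 := hfree _ h3 ⟨m, PD.red hA m N h2 hm⟩
      have hfp : Module.FinitePresentation A N := Module.finitePresentation_of_finite A N
      exact (Module.free_quotSMulTop_iff_free (R := A) (M := N)
        (IsLocalRing.maximalIdeal_le_jacobson _ hfm.1) h2).1 h4)
    obtain ⟨k, πb, hπb, hk⟩ := hC.syz _ hM
    letI : Module A M := Module.compHom M (algebraMap A (A ⧸ Ideal.span {f}))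
    have : IsScalarTower A (A ⧸ Ideal.span {f}) M := IsScalarTower.of_algebraMap_smul fun _ _ => rfl
    let π : (Fin k → A) →ₗ[A] M := πb.restrictScalars A ∘ₗ qk f k
    have hπ : Function.Surjective π := hπb.comp (qk_surj f k)
    have hfM : Module.Finite A M := Module.Finite.of_surjective π hπ
    have hN : ModuleCat.of A (LinearMap.ker π) ∈ liftC f C := by
      refine ⟨inferInstanceAs (Module.Finite A (LinearMap.ker π)), (hF k).submodule _ _, ?_⟩
      obtain ⟨i, q, hi, hiq, hq⟩ := mid_ses hA πb hπb
      exact hC.ext _ _ _ i q hi hiq hq hM hk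
    have h1 := Dep.of_ker π hπ hdep (key _ hN)
    exact (dep_iff_of_surj (qsurj f) n _).1 h1
  · intro M _ _ _ hM k πb hπb g
    letI : Module A M := Module.compHom M (algebraMap A (A ⧸ Ideal.span {f}))
    have : IsScalarTower A (A ⧸ Ideal.span {f}) M := IsScalarTower.of_algebraMap_smul fun _ _ => rfl
    let π : (Fin k → A) →ₗ[A] M := πb.restrictScalars A ∘ₗ qk f k
    have hπ : Function.Surjective π := hπb.comp (qk_surj f k)
    have hfM : Module.Finite A M := Module.Finite.of_surjective π hπ
    have h1 := Dep.ker π hπ h.dep ((dep_iff_of_surj (qsurj f) n _).2 hM)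
    have h2 := h.ii _ h1
    exact ep_red hA πb h2 g

end
end

section
open CategoryTheory IsLocalRing
open scoped Pointwise
section

lemma GP.exists_quot (c : ℕ) : ∀ (A : Type u) [CommRing A] [IsLocalRing A] (fs : List A) (n : ℕ),
    fs.length = c → GP A n → ringKrullDim A ≤ n →
    RingTheory.Sequence.IsRegular A fs → ∃ (S : Type u) (_ : CommRing S) (_ : IsLocalRing S) (m : ℕ),
      GP S m ∧ ringKrullDim S ≤ m ∧ Nonempty ((A ⧸ Ideal.span {x : A | x ∈ fs}) ≃+* S) := by
  induction c with
  | zero =>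
    intro A _ _ fs n hfs h hd hreg
    rw [List.length_eq_zero_iff] at hfs
    subst hfs
    refine ⟨A, inferInstance, inferInstance, n, h, hd, ⟨?_⟩⟩
    have : Ideal.span {x : A | x ∈ ([] : List A)} = ⊥ := by simp
    exact (Ideal.quotEquivOfEq this).trans (RingEquiv.quotientBot A)
  | succ c ih =>
    intro A _ _ fs n hfs h hd hreg
    match fs, hfs with
    | f :: fs, hfs =>
    have hno := h.noeth
    rw [RingTheory.Sequence.isRegular_cons_iff'] at hreg
    obtain ⟨hf, hreg⟩ := hreg
    have hmem : f ∈ maximalIdeal A := by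
      rw [mem_maximalIdeal, mem_nonunits_iff]
      intro hu
      have := hreg.nontrivial
      apply not_subsingleton (QuotSMulTop f A)
      rw [Submodule.Quotient.subsingleton_iff]
      rw [eq_top_iff]
      intro y _
      rw [Submodule.mem_smul_pointwise_iff_exists]
      obtain ⟨u, rfl⟩ := hu
      exact ⟨u⁻¹ * y, trivial, by simp⟩
    have : Fact (f ∈ maximalIdeal A) := ⟨hmem⟩
    have hnz : f ∈ nonZeroDivisors A := by
      rw [mem_nonZeroDivisors_iff_right]
      intro y hy
      exact hf (by simpa [mul_comm] using hy)
    have hdim := ringKrullDim_quotient_succ_le_of_nonZeroDivisor hnz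
    have hd0 : 0 ≤ ringKrullDim (A ⧸ Ideal.span {f}) := ringKrullDim_nonneg_of_nontrivial
    obtain ⟨n, rfl⟩ : ∃ n', n = n' + 1 := by
      cases n with
      | zero =>
        exfalso
        have h1 : (1 : WithBot ℕ∞) ≤ 0 := by
          calc (1 : WithBot ℕ∞) = 0 + 1 := by simp
            _ ≤ ringKrullDim (A ⧸ Ideal.span {f}) + 1 := by gcongr
            _ ≤ _ := hdim.trans hd
        exact absurd h1 (by decide)
      | succ n => exact ⟨n, rfl⟩
    have hd' : ringKrullDim (A ⧸ Ideal.span {f}) ≤ n := by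
      have := hdim.trans hd
      push_cast at this
      generalize ringKrullDim (A ⧸ Ideal.span {f}) = d at this
      cases d with
      | bot => exact bot_le
      | coe d =>
        have h3 : d + 1 ≤ (n : ℕ∞) + 1 := by exact_mod_cast this
        have h4 := (ENat.add_le_add_iff_right (by simp)).1 h3
        exact_mod_cast h4
    obtain ⟨e⟩ := quot_self_equiv f
    have hreg' : RingTheory.Sequence.IsRegular (A ⧸ Ideal.span {f})
        (fs.map (Ideal.Quotient.mk (Ideal.span {f}))) := by
      exact (LinearEquiv.isRegular_congr (extSE (qsurj f) e) _).2 hreg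
    obtain ⟨S, i1, i2, m, h1, h2, ⟨e2⟩⟩ := ih (A ⧸ Ideal.span {f}) (fs.map (Ideal.Quotient.mk (Ideal.span {f}))) n
      (by simpa using hfs) (h.step hf) hd' hreg'
    refine ⟨S, i1, i2, m, h1, h2, ⟨RingEquiv.trans ?_ e2⟩⟩
    have e3 := (DoubleQuot.quotQuotEquivQuotSup (Ideal.span {f}) (Ideal.span {x | x ∈ fs})).symm
    refine (Ideal.quotEquivOfEq ?_).trans (e3.trans (Ideal.quotEquivOfEq ?_))
    · rw [← Ideal.span_union]
      congr 1
      ext x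
      simp
    · rw [Ideal.map_span]
      congr 1
      ext x
      simp
end
end

section
open CategoryTheory IsLocalRing TensorProduct
section

/-- completion-like extension -/
structure CompLike (R S : Type u) [CommRing R] [CommRing S] [IsLocalRing R] [IsLocalRing S]
    [Algebra R S] : Prop where
  flat : Module.Flat R S
  loc : IsLocalHom (algebraMap R S)
  map : (maximalIdeal R).map (algebraMap R S) = maximalIdeal S
  dense : ∀ (n : ℕ) (s : S), ∃ r : R, s - algebraMap R S r ∈ (maximalIdeal R ^ n).map (algebraMap R S)

lemma compLike_completion (R : Type u) [CommRing R] [IsLocalRing R] [IsNoetherianRing R] :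
    CompLike R (AdicCompletion (maximalIdeal R) R) where
  flat := AdicCompletion.flat_of_isNoetherian _
  loc := inferInstance
  map := AdicCompletion.maximalIdeal_eq_map.symm
  dense := by
    intro n s
    obtain ⟨r, hr⟩ := Ideal.Quotient.mk_surjective (AdicCompletion.evalₐ (maximalIdeal R) n s)
    refine ⟨r, ?_⟩
    rw [← Submodule.restrictScalars_mem R, ← Ideal.smul_top_eq_map,
      AdicCompletion.pow_smul_top_eq_ker_eval (maximalIdeal R).fg_of_isNoetherianRing,
      LinearMap.mem_ker]
    have h1 : AdicCompletion.evalₐ (maximalIdeal R) n (s - algebraMap R _ r) = 0 := by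
      rw [map_sub, ← hr, AlgHom.commutes]
      exact sub_self _
    rw [← AdicCompletion.factor_evalₐ_eq_eval (h := by simp), h1, map_zero]

lemma CompLike.trans_ringEquiv {R S T : Type u} [CommRing R] [CommRing S] [CommRing T]
    [IsLocalRing R] [IsLocalRing S] [IsLocalRing T] [Algebra R S] [Algebra R T]
    (h : CompLike R S) (e : S ≃ₐ[R] T) : CompLike R T where
  flat := by
    have := h.flat
    exact Module.Flat.of_linearEquiv e.symm.toLinearEquiv
  loc := by
    have := h.loc
    have h1 : algebraMap R T = (e.toRingEquiv : S →+* T).comp (algebraMap R S) := by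
      ext x; simp
    rw [h1]
    infer_instance
  map := by
    have h1 : algebraMap R T = (e.toRingEquiv : S →+* T).comp (algebraMap R S) := by
      ext x; simp
    rw [h1, ← Ideal.map_map, h.map]
    exact IsLocalRing.map_ringEquiv_maximalIdeal e.toRingEquiv
  dense := by
    intro n t
    have h1 : algebraMap R T = (e.toRingEquiv : S →+* T).comp (algebraMap R S) := by
      ext x; simp
    obtain ⟨r, hr⟩ := h.dense n (e.symm t)
    refine ⟨r, ?_⟩
    have h2 := Ideal.mem_map_of_mem (e.toRingEquiv : S →+* T) hr
    rw [Ideal.map_map, ← h1] at h2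
    simpa using h2

lemma exists_S {R : Type u} [CommRing R] [IsLocalRing R] [IsNoetherianRing R]
    (hci : IsCompleteIntersection R) : ∃ (S : Type u) (_ : CommRing S) (_ : IsLocalRing S)
      (_ : Algebra R S) (n : ℕ), CompLike R S ∧ GP S n ∧ ringKrullDim S ≤ n := by
  obtain ⟨⟨Q, hreg, fs, hfs, e⟩⟩ := hci
  obtain ⟨n, hQ, hn⟩ := RegGen.of_isRegularLocal Q hreg
  obtain ⟨S, i1, i2, m, h1, h2, ⟨e2⟩⟩ := GP.exists_quot _ Q fs n rfl (GP.of_regGen hn) hn.1.le hfs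
  letI : Algebra R S := ((e.trans e2).toRingHom.comp
    (algebraMap R (AdicCompletion (maximalIdeal R) R))).toAlgebra
  refine ⟨S, i1, i2, inferInstance, m, ?_, h1, h2⟩
  exact (compLike_completion R).trans_ringEquiv (AlgEquiv.ofRingEquiv (f := e.trans e2) fun r => rfl)

lemma CompLike.dim_le {R S : Type u} [CommRing R] [CommRing S] [IsLocalRing R] [IsLocalRing S]
    [Algebra R S] [IsNoetherianRing R] [IsNoetherianRing S] (h : CompLike R S) :
    ringKrullDim R ≤ ringKrullDim S := by
  have := h.flat
  have := h.loc
  have : Algebra.HasGoingDown R S := Algebra.HasGoingDown.of_flat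
  have : (maximalIdeal S).LiesOver (maximalIdeal R) := by
    exact ⟨(IsLocalRing.maximalIdeal_comap (algebraMap R S)).symm⟩
  rw [← maximalIdeal_height_eq_ringKrullDim, ← maximalIdeal_height_eq_ringKrullDim,
    Ideal.height_eq_height_add_of_liesOver_of_hasGoingDown (maximalIdeal R) (maximalIdeal S)]
  exact_mod_cast le_self_add

end
end

section
open CategoryTheory IsLocalRing TensorProduct
section

lemma EP.general {A : Type u} [CommRing A] {N K F : Type u} [AddCommGroup N] [Module A N]
    [AddCommGroup K] [Module A K] [AddCommGroup F] [Module A F] (h : EP A N) {k : ℕ}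
    (e : F ≃ₗ[A] (Fin k → A)) (i : K →ₗ[A] F) (p : F →ₗ[A] N) (hi : Function.Injective i)
    (hip : Function.Exact i p) (hp : Function.Surjective p) (φ : K →ₗ[A] A) :
    ∃ ψ : F →ₗ[A] A, ∀ x, ψ (i x) = φ x := by
  let π : (Fin k → A) →ₗ[A] N := p ∘ₗ e.symm.toLinearMap
  have hπ : Function.Surjective π := hp.comp e.symm.surjective
  let j : LinearMap.ker π →ₗ[A] LinearMap.range i :=
    LinearMap.codRestrict _ (e.symm.toLinearMap ∘ₗ (LinearMap.ker π).subtype) (by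
      rintro ⟨x, hx⟩
      exact (hip _).1 hx)
  obtain ⟨ψ, hψ⟩ := h k π hπ (φ ∘ₗ (LinearEquiv.ofInjective i hi).symm.toLinearMap ∘ₗ j)
  refine ⟨ψ ∘ₗ e.toLinearMap, fun x => ?_⟩
  have hx : e (i x) ∈ LinearMap.ker π := by
    simp [π, hip.apply_apply_eq_zero]
  have := hψ ⟨e (i x), hx⟩
  simp only [LinearMap.comp_apply] at this ⊢
  rw [LinearEquiv.coe_coe, this]
  have h2 : j ⟨e (i x), hx⟩ = LinearEquiv.ofInjective i hi x := by
    apply Subtype.ext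
    simp [j]
  rw [h2]; simp

variable {R S : Type u} [CommRing R] [CommRing S] [Algebra R S]

lemma bc_inj [Module.Flat R S] {A B : Type u} [AddCommGroup A] [AddCommGroup B] [Module R A] [Module R B]
    (f : A →ₗ[R] B) (hf : Function.Injective f) : Function.Injective (f.baseChange S) :=
  Module.Flat.lTensor_preserves_injective_linearMap (M := S) f hf

lemma bc_surj {A B : Type u} [AddCommGroup A] [AddCommGroup B] [Module R A] [Module R B]
    (f : A →ₗ[R] B) (hf : Function.Surjective f) : Function.Surjective (f.baseChange S) :=
  LinearMap.lTensor_surjective S hf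

lemma bc_exact {A B C : Type u} [AddCommGroup A] [AddCommGroup B] [AddCommGroup C] [Module R A]
    [Module R B] [Module R C] (f : A →ₗ[R] B) (g : B →ₗ[R] C) (h : Function.Exact f g)
    (hg : Function.Surjective g) : Function.Exact (f.baseChange S) (g.baseChange S) :=
  lTensor_exact S h hg

variable [IsLocalRing R] [IsLocalRing S] [IsNoetherianRing R]

lemma EP.descend [Module.Flat R S] [IsLocalHom (algebraMap R S)] {W : Type u} [AddCommGroup W]
    [Module R W] (h : EP S (S ⊗[R] W)) : EP R W := by
  intro k π hπ φ
  let ι := (LinearMap.ker π).subtype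
  obtain ⟨ψ, hψ⟩ := h.general (TensorProduct.piScalarRight R S S (Fin k)) (ι.baseChange S)
    (π.baseChange S) (bc_inj _ Subtype.val_injective)
    (bc_exact _ _ (LinearMap.exact_subtype_ker_map π) hπ) (bc_surj _ hπ)
    ((AlgebraTensorModule.rid R S S).toLinearMap ∘ₗ φ.baseChange S)
  obtain ⟨p, l, hl⟩ := Module.Finite.exists_fin (R := R) (M := LinearMap.ker π)
  let b : Fin p → R := fun j => φ (l j)
  let T : (Fin k → R) →ₗ[R] (Fin p → R) := LinearMap.pi fun j =>
    ∑ i, (l j).1 i • LinearMap.proj (R := R) (φ := fun _ : Fin k => R) i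
  have hT : ∀ y j, T y j = ∑ i, (l j).1 i * y i := by
    intro y j; simp [T, LinearMap.sum_apply]
  have hb : b ∈ LinearMap.range T := by
    rw [← Submodule.Quotient.mk_eq_zero]
    apply one_tmul_injective (R := R) (S := S)
    have key : ∀ j, algebraMap R S (b j) = ∑ i, algebraMap R S ((l j).1 i) * ψ (1 ⊗ₜ Pi.single i 1) := by
      intro j
      have := hψ (1 ⊗ₜ l j)
      simp only [LinearMap.baseChange_tmul, LinearMap.comp_apply, LinearEquiv.coe_coe,
        AlgebraTensorModule.rid_tmul, Algebra.smul_def, mul_one, b] at this ⊢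
      rw [← this]
      have h1 : ι (l j) = ∑ i, (l j).1 i • (Pi.single i 1 : Fin k → R) := by
        ext m; simp [ι, Finset.sum_apply, Pi.single_apply]
      rw [h1, tmul_sum, map_sum]
      refine Finset.sum_congr rfl fun i _ => ?_
      rw [tmul_smul, ← algebraMap_smul S, map_smul, smul_eq_mul]
    let e := TensorProduct.piScalarRight R S S (Fin p)
    have h2 : (1 : S) ⊗ₜ[R] b = ∑ i, ψ (1 ⊗ₜ Pi.single i 1) • ((1 : S) ⊗ₜ[R] T (Pi.single i 1)) := by
      apply e.injective
      ext j
      simp only [e, map_sum, map_smul, TensorProduct.piScalarRight_apply,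
        TensorProduct.piScalarRightHom_tmul, Finset.sum_apply, Pi.smul_apply, smul_eq_mul, hT]
      rw [Algebra.smul_def, key j, mul_one]
      refine Finset.sum_congr rfl fun i _ => ?_
      simp [Pi.single_apply, Algebra.smul_def, mul_comm]
    have h3 := congrArg ((LinearMap.range T).mkQ.baseChange S) h2
    simp only [LinearMap.baseChange_tmul, map_sum, map_smul] at h3
    have h4 : ∀ y, (LinearMap.range T).mkQ (T y) = 0 := fun y => by simp
    simp only [h4, tmul_zero, smul_zero, Finset.sum_const_zero] at h3
    exact h3
  obtain ⟨y, hy⟩ := hb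
  refine ⟨∑ i, y i • LinearMap.proj (R := R) (φ := fun _ : Fin k => R) i, ?_⟩
  intro x
  have : (∑ i, y i • LinearMap.proj (R := R) (φ := fun _ : Fin k => R) i) ∘ₗ ι = φ := by
    apply LinearMap.ext_on_range hl
    intro j
    have := congrFun hy j
    rw [hT] at this
    simp only [b] at this
    rw [← this]
    simp [LinearMap.sum_apply, ι, mul_comm]
  exact LinearMap.congr_fun this x

lemma PD.descend [Module.Flat R S] [IsLocalHom (algebraMap R S)] [IsNoetherianRing S] (n : ℕ) {X : Type u}
    [AddCommGroup X] [Module R X] [Module.Finite R X] (h : PD S (S ⊗[R] X) n) : PD R X n := by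
  induction n generalizing X with
  | zero =>
    have := h.free
    have : Module.FaithfullyFlat R S := Module.FaithfullyFlat.of_flat_of_isLocalHom
    have : Module.Flat R X := Module.Flat.of_flat_tensorProduct R X S
    have : Module.Free R X := Module.free_of_flat_of_isLocalRing
    exact PD.of_free 0
  | succ n ih =>
    obtain ⟨k, π, hπ⟩ := Module.Finite.exists_fin' R X
    have : Module.Free S (S ⊗[R] (Fin k → R)) := inferInstance
    rw [PD.ker π hπ]
    apply ih
    exact (PD.ses _ _ (bc_inj (S := S) _ Subtype.val_injective)
      (bc_exact _ _ (LinearMap.exact_subtype_ker_map π) hπ) (bc_surj _ hπ) n).1 h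

end
end

section
open CategoryTheory IsLocalRing TensorProduct
section

/-- elements whose multiplication factors through a finite free module -/
def FI (R : Type u) [CommRing R] (Y : Type u) [AddCommGroup Y] [Module R Y] : Ideal R where
  carrier := {a | ∃ G : ModuleCat.{u} R, Module.Finite R G ∧ Module.Free R G ∧
    ∃ (p : Y →ₗ[R] G) (q : G →ₗ[R] Y), ∀ y, q (p y) = a • y}
  zero_mem' := ⟨ModuleCat.of R R, inferInstanceAs (Module.Finite R R),
    inferInstanceAs (Module.Free R R), 0, 0, by simp⟩
  add_mem' := by
    rintro a b ⟨G, h1, h2, p, q, h⟩ ⟨G', h1', h2', p', q', h'⟩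
    refine ⟨ModuleCat.of R (G × G'), inferInstanceAs (Module.Finite R (G × G')),
      inferInstanceAs (Module.Free R (G × G')), p.prod p', q.coprod q', fun y => ?_⟩
    simp [h, h', add_smul]
  smul_mem' := by
    rintro c a ⟨G, h1, h2, p, q, h⟩
    refine ⟨G, h1, h2, p, c • q, fun y => ?_⟩
    simp [h, mul_smul]

variable {R : Type u} [CommRing R]

lemma mem_FI {Y G : Type u} [AddCommGroup Y] [Module R Y] [AddCommGroup G] [Module R G]
    [Module.Finite R G] [Module.Free R G] (p : Y →ₗ[R] G) (q : G →ₗ[R] Y) (a : R)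
    (h : ∀ y, q (p y) = a • y) : a ∈ FI R Y :=
  ⟨ModuleCat.of R G, inferInstanceAs (Module.Finite R G), inferInstanceAs (Module.Free R G), p, q, h⟩

lemma FI.lift {Y F : Type u} [AddCommGroup Y] [Module R Y] [AddCommGroup F] [Module R F]
    (p : F →ₗ[R] Y) (hp : Function.Surjective p) {a : R} (ha : a ∈ FI R Y) :
    ∃ (G : ModuleCat.{u} R) (_ : Module.Finite R G) (_ : Module.Free R G) (u : Y →ₗ[R] G)
      (v : G →ₗ[R] F), ∀ y, p (v (u y)) = a • y := by
  obtain ⟨G, h1, h2, u, v, h⟩ := ha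
  obtain ⟨w, hw⟩ := Module.projective_lifting_property p v hp
  exact ⟨G, h1, h2, u, w, fun y => by rw [← h, ← hw]; rfl⟩

lemma FI.retract {K F Y : Type u} [AddCommGroup Y] [Module R Y] [AddCommGroup F] [Module R F]
    [AddCommGroup K] [Module R K] (i : K →ₗ[R] F) (p : F →ₗ[R] Y) (hi : Function.Injective i)
    (hip : Function.Exact i p) (hp : Function.Surjective p) {a : R} (ha : a ∈ FI R Y) :
    ∃ τ : F →ₗ[R] K, (∀ x, τ (i x) = a • x) ∧ ∃ (G : ModuleCat.{u} R) (_ : Module.Finite R G)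
      (_ : Module.Free R G) (u : F →ₗ[R] G) (v : G →ₗ[R] F), ∀ y, i (τ y) + v (u y) = a • y := by
  obtain ⟨G, h1, h2, u, v, h⟩ := FI.lift p hp ha
  let t : F →ₗ[R] LinearMap.range i := LinearMap.codRestrict _ (a • LinearMap.id - v ∘ₗ u ∘ₗ p) (by
    intro y
    apply (hip _).1
    simp [h])
  let e := LinearEquiv.ofInjective i hi
  have he : ∀ z, i (e.symm z) = z.1 := fun z => by
    have := congrArg Subtype.val (e.apply_symm_apply z)
    exact this
  refine ⟨e.symm.toLinearMap ∘ₗ t, fun x => ?_, G, h1, h2, u ∘ₗ p, v, fun y => ?_⟩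
  · apply hi
    rw [LinearMap.comp_apply, LinearEquiv.coe_coe, he]
    change a • i x - v (u (p (i x))) = i (a • x)
    simp [hip.apply_apply_eq_zero]
  · rw [LinearMap.comp_apply, LinearEquiv.coe_coe, he]
    change a • y - v (u (p y)) + v (u (p y)) = a • y
    simp

lemma FI.ker {K F Y : Type u} [AddCommGroup Y] [Module R Y] [AddCommGroup F] [Module R F]
    [AddCommGroup K] [Module R K] [Module.Finite R F] [Module.Free R F]
    (i : K →ₗ[R] F) (p : F →ₗ[R] Y) (hi : Function.Injective i)
    (hip : Function.Exact i p) (hp : Function.Surjective p) {a : R} (ha : a ∈ FI R Y) :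
    a ∈ FI R K := by
  obtain ⟨τ, h, -⟩ := FI.retract i p hi hip hp ha
  exact mem_FI i τ a h

lemma FI.ext {A B C : Type u} [AddCommGroup A] [Module R A] [AddCommGroup B] [Module R B]
    [AddCommGroup C] [Module R C] (i : A →ₗ[R] B) (p : B →ₗ[R] C) (hi : Function.Injective i)
    (hip : Function.Exact i p) (hp : Function.Surjective p) {a c : R} (ha : a ∈ FI R A)
    (hc : c ∈ FI R C) : a * c ∈ FI R B := by
  obtain ⟨τ, -, G, h1, h2, u, v, h⟩ := FI.retract i p hi hip hp hc
  obtain ⟨G', h1', h2', u', v', h'⟩ := ha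
  refine mem_FI ((u' ∘ₗ τ).prod u) ((i ∘ₗ v').coprod (a • v)) (a * c) fun y => ?_
  simp [h', ← smul_add, h, mul_smul]

lemma FI.equiv {A B : Type u} [AddCommGroup A] [Module R A] [AddCommGroup B] [Module R B]
    (e : A ≃ₗ[R] B) {a : R} (ha : a ∈ FI R A) : a ∈ FI R B := by
  obtain ⟨G, h1, h2, u, v, h⟩ := ha
  exact mem_FI (u ∘ₗ e.symm.toLinearMap) (e.toLinearMap ∘ₗ v) a fun y => by simp [h]

lemma ext_res_zero [IsLocalRing R] {M F : Type u} [AddCommGroup M] [Module R M] [AddCommGroup F] [Module R F]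
    (π : F →ₗ[R] M) (hπ : Function.Surjective π) {x : R} (hx : x ∈ maximalIdeal R) (i : ℕ)
    (h : Subsingleton (Abelian.Ext (ModuleCat.of R (ResidueField R)) (ModuleCat.of R
      (LinearMap.ker ((x • LinearMap.id : M →ₗ[R] M).coprod (-π)))) i)) :
    Subsingleton (Abelian.Ext (ModuleCat.of R (ResidueField R)) (ModuleCat.of R M) i) := by
  set g := (x • LinearMap.id : M →ₗ[R] M).coprod (-π) with hg
  have hgs : Function.Surjective g := by
    intro m
    obtain ⟨f, hf⟩ := hπ (-m)
    exact ⟨(0, f), by simp [hg, hf]⟩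
  have hS := sesOf_shortExact (LinearMap.ker g).subtype g Subtype.val_injective
    (LinearMap.exact_subtype_ker_map g) hgs
  refine subsingleton_of_forall_eq 0 fun e => ?_
  let b := e.comp (Abelian.Ext.mk₀ (ModuleCat.ofHom (LinearMap.inl R M F))) (add_zero i)
  have hb : b.comp (Abelian.Ext.mk₀ (sesOf (LinearMap.ker g).subtype g
    (LinearMap.exact_subtype_ker_map g)).g) (add_zero i) = 0 := by
    have h1 : ModuleCat.ofHom (LinearMap.inl R M F) ≫ ModuleCat.ofHom g = x • 𝟙 (ModuleCat.of R M) := by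
      ext m; simp [hg]
    change b.comp (Abelian.Ext.mk₀ (ModuleCat.ofHom g)) (add_zero i) = 0
    rw [Abelian.Ext.comp_assoc_of_third_deg_zero, Abelian.Ext.mk₀_comp_mk₀, h1]
    have h2 := Abelian.Ext.postcomp_smul_id_eq_zero_of_mem_annihilator (M := ModuleCat.of R M)
      (N := ModuleCat.of R (ResidueField R)) (r := x) (by
        rw [Module.mem_annihilator]
        intro m
        change x • (m : ResidueField R) = 0
        rw [Algebra.smul_def]
        have : algebraMap R (ResidueField R) x = 0 := by
          rw [IsLocalRing.ResidueField.algebraMap_eq, IsLocalRing.residue_eq_zero_iff]; exact hx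
        rw [this, zero_mul]) i
    exact congrArg (fun f => f.hom e) h2
  obtain ⟨y, hy⟩ := Abelian.Ext.covariant_sequence_exact₂ _ hS b hb
  have hy0 : y = 0 := h.elim _ _
  rw [hy0, Abelian.Ext.zero_comp] at hy
  have h3 : b.comp (Abelian.Ext.mk₀ (ModuleCat.ofHom (LinearMap.fst R M F))) (add_zero i) = e := by
    rw [Abelian.Ext.comp_assoc_of_third_deg_zero, Abelian.Ext.mk₀_comp_mk₀]
    have : ModuleCat.ofHom (LinearMap.inl R M F) ≫ ModuleCat.ofHom (LinearMap.fst R M F) =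
      𝟙 (ModuleCat.of R M) := by ext m; simp
    rw [this, Abelian.Ext.comp_mk₀_id]
  rw [← h3, ← hy]
  rw [Abelian.Ext.zero_comp]

def LF (R : Type u) [CommRing R] [IsLocalRing R] (Y : Type u) [AddCommGroup Y] [Module R Y] : Prop :=
  ∃ n : ℕ, maximalIdeal R ^ n ≤ FI R Y

variable [IsLocalRing R] [IsNoetherianRing R]

lemma LF.of_radical {Y : Type u} [AddCommGroup Y] [Module R Y]
    (h : maximalIdeal R ≤ (FI R Y).radical) : LF R Y :=
  Ideal.exists_pow_le_of_le_radical_of_fg h (maximalIdeal R).fg_of_isNoetherianRing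

lemma LF.ext {A B C : Type u} [AddCommGroup A] [Module R A] [AddCommGroup B] [Module R B]
    [AddCommGroup C] [Module R C] (i : A →ₗ[R] B) (p : B →ₗ[R] C) (hi : Function.Injective i)
    (hip : Function.Exact i p) (hp : Function.Surjective p) (ha : LF R A) (hc : LF R C) : LF R B := by
  obtain ⟨n, hn⟩ := ha
  obtain ⟨m, hm⟩ := hc
  refine ⟨n + m, ?_⟩
  rw [pow_add, Ideal.mul_le]
  exact fun a ha c hc => FI.ext i p hi hip hp (hn ha) (hm hc)

lemma LF.ker {k : ℕ} {Y : Type u} [AddCommGroup Y] [Module R Y] (π : (Fin k → R) →ₗ[R] Y)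
    (hπ : Function.Surjective π) (h : LF R Y) : LF R (LinearMap.ker π) := by
  obtain ⟨n, hn⟩ := h
  exact ⟨n, fun a ha => FI.ker (LinearMap.ker π).subtype π Subtype.val_injective
    (LinearMap.exact_subtype_ker_map π) hπ (hn ha)⟩

lemma exists_radical {𝒳 : Set (ModuleCat.{u} R)} (h : IsResolving R 𝒳) (s : Finset R)
    (hs : ∀ x ∈ s, x ∈ maximalIdeal R) (M : ModuleCat.{u} R) (hM : M ∈ 𝒳) :
    ∃ Y ∈ 𝒳, (∀ x ∈ s, x ∈ (FI R Y).radical) ∧ ∀ n, Dep R n Y → Dep R n M := by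
  classical
  induction s using Finset.induction_on with
  | empty => exact ⟨M, hM, by simp, fun _ h => h⟩
  | insert x s hxs ih =>
    obtain ⟨Y, hY, hr, hd⟩ := ih (fun y hy => hs y (Finset.mem_insert_of_mem hy))
    have := h.finite Y hY
    obtain ⟨k, π, hπ⟩ := Module.Finite.exists_fin' R Y
    let g := (x • LinearMap.id : Y →ₗ[R] Y).coprod (-π)
    have hK := h.ker_mem π hπ (h.fin_free k) hY
    let i : LinearMap.ker π →ₗ[R] LinearMap.ker g := LinearMap.codRestrict _
      (LinearMap.inr R Y (Fin k → R) ∘ₗ (LinearMap.ker π).subtype) (by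
        rintro ⟨z, hz⟩; simpa [g] using hz)
    let p : LinearMap.ker g →ₗ[R] Y := LinearMap.fst R Y (Fin k → R) ∘ₗ (LinearMap.ker g).subtype
    have hi : Function.Injective i := by
      intro a b hab
      have := congrArg (fun z => z.1.2) hab
      exact Subtype.ext this
    have hip : Function.Exact i p := by
      rintro ⟨⟨a, b⟩, hab⟩
      constructor
      · intro h0
        have h0 : a = 0 := h0
        subst h0
        have hb : b ∈ LinearMap.ker π := by simpa [g] using hab
        exact ⟨⟨b, hb⟩, rfl⟩
      · rintro ⟨z, hz⟩
        have := congrArg (fun z => z.1.1) hz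
        exact this.symm
    have hp : Function.Surjective p := by
      intro y
      obtain ⟨b, hb⟩ := hπ (x • y)
      exact ⟨⟨(y, b), by simp [g, hb]⟩, rfl⟩
    have hmem : ModuleCat.of R (LinearMap.ker g) ∈ 𝒳 := h.ext i p hi hip hp hK hY
    refine ⟨ModuleCat.of R (LinearMap.ker g), hmem, ?_, ?_⟩
    · intro y hy
      rcases Finset.mem_insert.1 hy with rfl | hy
      · apply Ideal.le_radical
        refine mem_FI (LinearMap.snd R Y (Fin k → R) ∘ₗ (LinearMap.ker g).subtype)
          (LinearMap.codRestrict _ (π.prod (y • LinearMap.id)) (by intro c; simp [g])) y ?_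
        rintro ⟨⟨a, b⟩, hab⟩
        apply Subtype.ext
        have : y • a = π b := by simpa [g, ← sub_eq_add_neg, sub_eq_zero] using hab
        simp [this]
      · obtain ⟨n, hn⟩ := hr y hy
        refine ⟨n + n, ?_⟩
        rw [pow_add]
        exact FI.ext i p hi hip hp (FI.ker (LinearMap.ker π).subtype π Subtype.val_injective
          (LinearMap.exact_subtype_ker_map π) hπ hn) hn
    · intro n hn
      apply hd
      have hf : Module.Finite R (LinearMap.ker g) := h.finite _ hmem
      rw [dep_iff_ext]
      have hn' := (dep_iff_ext n (LinearMap.ker g)).1 hn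
      intro j hj
      exact ext_res_zero π hπ (hs x (Finset.mem_insert_self _ _)) j (hn' j hj)

lemma exists_LF {𝒳 : Set (ModuleCat.{u} R)} (h : IsResolving R 𝒳) (M : ModuleCat.{u} R) (hM : M ∈ 𝒳) :
    ∃ Y ∈ 𝒳, LF R Y ∧ ∀ n, Dep R n Y → Dep R n M := by
  obtain ⟨s, hs⟩ := (maximalIdeal R).fg_of_isNoetherianRing
  obtain ⟨Y, hY, hr, hd⟩ := exists_radical h s (fun x hx => hs ▸ Ideal.subset_span hx) M hM
  refine ⟨Y, hY, LF.of_radical ?_, hd⟩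
  rw [← hs, Ideal.span_le]
  exact hr

end
end

section
open CategoryTheory IsLocalRing TensorProduct
section
variable {R S : Type u} [CommRing R] [CommRing S] [Algebra R S] [IsLocalRing R] [IsLocalRing S]

lemma approx_hom (hc : CompLike R S) [IsNoetherianRing R] {L F A B : Type u} [AddCommGroup L] [Module R L]
    [AddCommGroup F] [Module R F] [AddCommGroup A] [Module R A] [AddCommGroup B] [Module R B]
    [Module.Finite R L] (i : L →ₗ[R] F) (p : F →ₗ[R] A) (hi : Function.Injective i)
    (hip : Function.Exact i p) (hp : Function.Surjective p) (hA : LF R A)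
    (g : S ⊗[R] L →ₗ[S] S ⊗[R] B) :
    ∃ (h : L →ₗ[R] B) (ρ : S ⊗[R] F →ₗ[S] S ⊗[R] B), g = h.baseChange S + ρ ∘ₗ i.baseChange S := by
  obtain ⟨n, hn⟩ := hA
  have := hc.flat
  have : Module.FinitePresentation R L := Module.finitePresentation_of_finite R L
  have hb := Module.FinitePresentation.isBaseChange_map R L B S
  have hsm : ∀ (h : L →ₗ[R] B) (t : S), t ∈ (maximalIdeal R ^ n).map (algebraMap R S) →
      ∃ ρ : S ⊗[R] F →ₗ[S] S ⊗[R] B, t • h.baseChange S = ρ ∘ₗ i.baseChange S := by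
    intro h t ht
    induction ht using Submodule.span_induction with
    | mem x hx =>
      obtain ⟨a, ha, rfl⟩ := hx
      obtain ⟨τ, hτ, -⟩ := FI.retract i p hi hip hp (hn ha)
      refine ⟨(h ∘ₗ τ).baseChange S, ?_⟩
      rw [← LinearMap.baseChange_comp]
      have : (h ∘ₗ τ) ∘ₗ i = a • h := by ext x; simp [hτ]
      rw [this, LinearMap.baseChange_smul, algebraMap_smul]
    | zero => exact ⟨0, by simp⟩
    | add x y _ _ h1 h2 =>
      obtain ⟨ρ1, h1⟩ := h1
      obtain ⟨ρ2, h2⟩ := h2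
      exact ⟨ρ1 + ρ2, by rw [add_smul, h1, h2, LinearMap.add_comp]⟩
    | smul c x _ h1 =>
      obtain ⟨ρ1, h1⟩ := h1
      exact ⟨c • ρ1, by rw [smul_assoc, h1, LinearMap.smul_comp]⟩
  induction g using hb.inductionOn with
  | zero => exact ⟨0, 0, by simp⟩
  | tmul h => exact ⟨h, 0, by simp⟩
  | add g1 g2 h1 h2 =>
    obtain ⟨h1, ρ1, e1⟩ := h1
    obtain ⟨h2, ρ2, e2⟩ := h2
    refine ⟨h1 + h2, ρ1 + ρ2, ?_⟩
    rw [e1, e2, LinearMap.baseChange_add, LinearMap.add_comp]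
    abel
  | smul s g h1 =>
    obtain ⟨h, ρ, e⟩ := h1
    obtain ⟨r, hr⟩ := hc.dense n s
    obtain ⟨ρ', h'⟩ := hsm h _ hr
    refine ⟨r • h, s • ρ + ρ', ?_⟩
    rw [e, LinearMap.baseChange_smul]
    refine LinearMap.ext fun z => ?_
    have hz := LinearMap.congr_fun h' z
    simp only [LinearMap.smul_apply, LinearMap.comp_apply, LinearMap.add_apply, sub_smul,
      algebraMap_smul, smul_add] at hz ⊢
    rw [← hz]
    abel

lemma descend_ext (hc : CompLike R S) [IsNoetherianRing R] {A B E : Type u}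
    [AddCommGroup A] [Module R A] [AddCommGroup B] [Module R B] [Module.Finite R A]
    [AddCommGroup E] [Module S E] (hA : LF R A)
    (α : S ⊗[R] B →ₗ[S] E) (β : E →ₗ[S] S ⊗[R] A) (hα : Function.Injective α)
    (hαβ : Function.Exact α β) (hβ : Function.Surjective β) :
    ∃ (P : ModuleCat.{u} R) (j : B →ₗ[R] P) (p : P →ₗ[R] A), Function.Injective j ∧
      Function.Exact j p ∧ Function.Surjective p ∧ Nonempty (S ⊗[R] P ≃ₗ[S] E) := by
  have := hc.flat
  obtain ⟨k, π, hπ⟩ := Module.Finite.exists_fin' R A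
  let ι := (LinearMap.ker π).subtype
  have hιπ : Function.Exact ι π := LinearMap.exact_subtype_ker_map π
  obtain ⟨l, hl⟩ := Module.projective_lifting_property β (π.baseChange S) hβ
  have hlr : ∀ x, (l ∘ₗ ι.baseChange S) x ∈ LinearMap.range α := by
    intro x
    apply (hαβ _).1
    have : β (l (ι.baseChange S x)) = π.baseChange S (ι.baseChange S x) := LinearMap.congr_fun hl _
    rw [LinearMap.comp_apply, this]
    exact (bc_exact ι π hιπ hπ).apply_apply_eq_zero x
  let e := LinearEquiv.ofInjective α hα
  have he : ∀ z, α (e.symm z) = z.1 := fun z => congrArg Subtype.val (e.apply_symm_apply z)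
  let g : S ⊗[R] (LinearMap.ker π) →ₗ[S] S ⊗[R] B :=
    e.symm.toLinearMap ∘ₗ LinearMap.codRestrict (LinearMap.range α) (l ∘ₗ ι.baseChange S) hlr
  have hg : ∀ x, α (g x) = l (ι.baseChange S x) := fun x => he _
  obtain ⟨h, ρ, hhρ⟩ := approx_hom hc ι π Subtype.val_injective hιπ hπ hA g
  let l' : S ⊗[R] (Fin k → R) →ₗ[S] E := l - α ∘ₗ ρ
  have hl'β : ∀ x, β (l' x) = π.baseChange S x := by
    intro x
    have : β (l x) = π.baseChange S x := LinearMap.congr_fun hl x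
    simp [l', this, hαβ.apply_apply_eq_zero]
  have hl'ι : ∀ x, l' (ι.baseChange S x) = α (h.baseChange S x) := by
    intro x
    have h1 := LinearMap.congr_fun hhρ x
    simp only [LinearMap.add_apply, LinearMap.comp_apply] at h1
    simp only [l', LinearMap.sub_apply, LinearMap.comp_apply, ← hg, h1, map_add]
    abel
  obtain ⟨P, jX, jF, p, h1, h2, h3, h4, h5, h6, h7⟩ :=
    exists_pushout ι π Subtype.val_injective hιπ hπ h
  refine ⟨P, jX, p, h1, h2, h3, ?_⟩
  letI : Module R E := Module.compHom E (algebraMap R S)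
  haveI : IsScalarTower R S E := ⟨fun r s x => by
    change (r • s) • x = (algebraMap R S r) • (s • x)
    rw [Algebra.smul_def, mul_smul]⟩
  obtain ⟨ψ, hψX, hψF⟩ := h7 E
    ((α.restrictScalars R) ∘ₗ (TensorProduct.mk R S B 1))
    ((l'.restrictScalars R) ∘ₗ (TensorProduct.mk R S (Fin k → R) 1)) (by
      ext x
      have := hl'ι (1 ⊗ₜ x)
      simpa using this)
  let Ψ : S ⊗[R] P →ₗ[S] E := ψ.liftBaseChange S
  have hΨα : Ψ ∘ₗ jX.baseChange S = α := by
    apply TensorProduct.AlgebraTensorModule.curry_injective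
    ext x
    have := LinearMap.congr_fun hψX x
    simpa [Ψ] using this
  have hΨβ : β ∘ₗ Ψ = p.baseChange S := by
    apply TensorProduct.AlgebraTensorModule.curry_injective
    ext w
    obtain ⟨x, f, rfl⟩ := h6 w
    have e1 : ψ (jX x) = α (1 ⊗ₜ x) := LinearMap.congr_fun hψX x
    have e2 : ψ (jF f) = l' (1 ⊗ₜ f) := LinearMap.congr_fun hψF f
    have e3 : p (jF f) = π f := LinearMap.congr_fun h5 f
    have e4 : p (jX x) = 0 := h2.apply_apply_eq_zero x
    simp [Ψ, e1, e2, e3, e4, hl'β, hαβ.apply_apply_eq_zero]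
  have hb : Function.Bijective Ψ := by
    constructor
    · rw [injective_iff_map_eq_zero]
      intro z hz
      have hz' : p.baseChange S z = 0 := by rw [← hΨβ, LinearMap.comp_apply, hz, map_zero]
      obtain ⟨w, rfl⟩ := (bc_exact jX p h2 h3 z).1 hz'
      have : α w = 0 := by rw [← hΨα]; exact hz
      rw [(injective_iff_map_eq_zero α).1 hα w this, map_zero]
    · intro y
      obtain ⟨z, hz⟩ := bc_surj (S := S) p h3 (β y)
      have : β (y - Ψ z) = 0 := by
        rw [map_sub, ← hz, ← hΨβ, LinearMap.comp_apply, sub_self]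
      obtain ⟨w, hw⟩ := (hαβ _).1 this
      refine ⟨jX.baseChange S w + z, ?_⟩
      have : Ψ (jX.baseChange S w) = α w := LinearMap.congr_fun hΨα w
      rw [map_add, this, hw]; abel
  exact ⟨LinearEquiv.ofBijective Ψ hb⟩

def Xhat (S : Type u) [CommRing S] [Algebra R S] (𝒳 : Set (ModuleCat.{u} R)) : Set (ModuleCat.{u} S) :=
  {Z | ∃ X ∈ 𝒳, LF R X ∧ Nonempty (S ⊗[R] X ≃ₗ[S] Z)}

lemma Xhat_preRes (hc : CompLike R S) [IsNoetherianRing R] {𝒳 : Set (ModuleCat.{u} R)}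
    (h : IsResolving R 𝒳) : PreRes S (Xhat S 𝒳) where
  finite := by
    rintro M ⟨X, hX, -, ⟨e⟩⟩
    have := h.finite X hX
    exact Module.Finite.equiv e
  iso := by
    rintro M N ⟨X, hX, hL, ⟨e⟩⟩ e'
    exact ⟨X, hX, hL, ⟨e.trans e'⟩⟩
  ext := by
    rintro X Y Z f g hf hfg hg ⟨B, hB, hBL, ⟨eB⟩⟩ ⟨A, hA, hAL, ⟨eA⟩⟩
    have := h.finite A hA
    obtain ⟨P, j, p, h1, h2, h3, h4⟩ := descend_ext (S := S) hc hAL (f ∘ₗ eB.toLinearMap)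
      (eA.symm.toLinearMap ∘ₗ g) (hf.comp eB.injective) (by
        intro y
        have := hfg y
        simp only [LinearMap.comp_apply, LinearEquiv.coe_coe, LinearEquiv.map_eq_zero_iff, this]
        constructor
        · rintro ⟨x, rfl⟩
          exact ⟨eB.symm x, by simp⟩
        · rintro ⟨x, rfl⟩
          exact ⟨eB x, by simp⟩) (eA.symm.surjective.comp hg)
    exact ⟨P, h.ext j p h1 h2 h3 hB hA, LF.ext j p h1 h2 h3 hBL hAL, h4⟩
  syz := by
    rintro M ⟨X, hX, hL, ⟨e⟩⟩
    have := hc.flat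
    have := h.finite X hX
    obtain ⟨k, π, hπ⟩ := Module.Finite.exists_fin' R X
    let E := TensorProduct.piScalarRight R S S (Fin k)
    let π' : (Fin k → S) →ₗ[S] M := e.toLinearMap ∘ₗ π.baseChange S ∘ₗ E.symm.toLinearMap
    let ι := (LinearMap.ker π).subtype
    have hex := bc_exact (S := S) ι π (LinearMap.exact_subtype_ker_map π) hπ
    refine ⟨k, π', ?_, ModuleCat.of R (LinearMap.ker π), h.ker_mem π hπ (h.fin_free k) hX, hL.ker π hπ, ?_⟩
    · exact e.surjective.comp ((bc_surj π hπ).comp E.symm.surjective)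
    · let t := E.toLinearMap ∘ₗ ι.baseChange S
      have ht : Function.Injective t := E.injective.comp (bc_inj ι Subtype.val_injective)
      have hr : LinearMap.range t = LinearMap.ker π' := by
        ext z
        simp only [LinearMap.mem_range, LinearMap.mem_ker, π', t, LinearMap.comp_apply,
          LinearEquiv.coe_coe, LinearEquiv.map_eq_zero_iff]
        rw [hex]
        constructor
        · rintro ⟨y, rfl⟩
          exact ⟨y, by simp⟩
        · rintro ⟨y, hy⟩
          exact ⟨y, by rw [hy]; simp⟩
      exact ⟨(LinearEquiv.ofInjective t ht).trans (LinearEquiv.ofEq _ _ hr)⟩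

end
end

section
open CategoryTheory IsLocalRing TensorProduct
section

lemma isMCM_iff {R : Type u} [CommRing R] [IsLocalRing R] [IsNoetherianRing R] {n : ℕ}
    (hn : ringKrullDim R = n) (M : ModuleCat.{u} R) [Module.Finite R M] :
    IsMCM R M ↔ Dep R n M := by
  rw [dep_iff_ext, IsMCM, hn, moduleDepth]
  have : ((n : WithBot ℕ∞)) = ((n : ℕ∞) : WithBot ℕ∞) := rfl
  rw [this, WithBot.coe_le_coe, le_sInf_iff]
  constructor
  · intro h i hi
    by_contra hc
    have := h i ⟨i, fun h' => hc ((extVanish_iff R i _ _).1 h'), rfl⟩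
    have : n ≤ i := by exact_mod_cast this
    omega
  · rintro h _ ⟨i, hi, rfl⟩
    have : n ≤ i := by
      by_contra hc
      exact hi ((extVanish_iff R i _ _).2 (h i (by omega)))
    exact Nat.cast_le.2 this

lemma main_thm (R : Type u) [CommRing R] [IsNoetherianRing R] [IsLocalRing R]
    (hci : IsCompleteIntersection R) (hdim : 0 < ringKrullDim R)
    (𝒳 : Set (ModuleCat.{u} R)) (h : IsResolving R 𝒳) :
    (¬ ContravariantlyInfinite R 𝒳 ↔
      ¬ ∃ M ∈ 𝒳, (∃ n : ℕ, ProjDimLE R M n) ∧ ¬ ProjDimLE R M 0) ∧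
    (¬ ContravariantlyInfinite R 𝒳 ↔ ∀ M ∈ 𝒳, IsMCM R M) := by
  obtain ⟨S, _, _, _, n, hc, hG, hSd⟩ := exists_S hci
  have := hc.flat
  have := hc.loc
  have := hG.noeth
  have hdR : Dep R n R := by
    refine Dep.of_baseChange hc.map ?_
    exact hG.dep.equiv (AlgebraTensorModule.rid R S S).symm
  have hn : ringKrullDim R = n := le_antisymm (hc.dim_le.trans hSd) hdR.le_dim
  have h12 : ¬ ContravariantlyInfinite R 𝒳 →
      ¬ ∃ M ∈ 𝒳, (∃ n : ℕ, ProjDimLE R M n) ∧ ¬ ProjDimLE R M 0 := by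
    rintro h1 ⟨M, hM, ⟨m, hm⟩, h0⟩
    apply h1
    refine contraInf_of_pd h m M hM ((projDimLE_iff_PD M m).1 hm) ?_
    intro hf
    exact h0 ((projDimLE_iff_PD M 0).2 (PD.of_free 0))
  have h23 : (¬ ∃ M ∈ 𝒳, (∃ n : ℕ, ProjDimLE R M n) ∧ ¬ ProjDimLE R M 0) →
      ∀ M ∈ 𝒳, IsMCM R M := by
    intro h2 M hM
    have := h.finite M hM
    rw [isMCM_iff hn]
    obtain ⟨Y, hY, hL, hd⟩ := exists_LF h M hM
    apply hd
    have := h.finite Y hY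
    refine Dep.of_baseChange hc.map ?_
    refine hG.i (Xhat S 𝒳) (Xhat_preRes hc h) ?_ (ModuleCat.of S (S ⊗[R] Y))
      ⟨Y, hY, hL, ⟨LinearEquiv.refl _ _⟩⟩
    rintro Z ⟨X, hX, -, ⟨e⟩⟩ ⟨m, hm⟩
    have := h.finite X hX
    have h4 : PD R X m := PD.descend m (PD.equiv hm e.symm)
    have h5 : PD R X 0 := by
      rw [← projDimLE_iff_PD]
      by_contra h0
      exact h2 ⟨X, hX, ⟨m, (projDimLE_iff_PD X m).2 h4⟩, h0⟩
    have := h5.free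
    exact Module.Free.of_equiv e
  have h31 : (∀ M ∈ 𝒳, IsMCM R M) → ¬ ContravariantlyInfinite R 𝒳 := by
    intro h3 hinf
    have hn0 : n ≠ 0 := by
      rintro rfl
      rw [hn] at hdim
      simp at hdim
    obtain ⟨m, rfl⟩ := Nat.exists_eq_succ_of_ne_zero hn0
    obtain ⟨x, hx, hreg, -⟩ := Dep.succ_iff.1 hdR
    let M : ModuleCat.{u} R := ModuleCat.of R (R ⧸ Ideal.span {x})
    have hMf : Module.Finite R M := inferInstanceAs (Module.Finite R (R ⧸ Ideal.span {x}))
    refine hinf M hMf ?_ ⟨ModuleCat.of R R, (Ideal.span {x}).mkQ, ?_, ?_⟩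
    · intro hM
      have h5 := (isMCM_iff hn M).1 (h3 M hM)
      obtain ⟨e⟩ := quot_self_equiv x
      have h6 := (Dep.quot_iff hx hreg).2 (Dep.equiv h5 e)
      have h7 := h6.le_dim
      rw [hn] at h7
      have : m.succ + 1 ≤ m.succ := by exact_mod_cast h7
      omega
    · exact h.freeMem _ (inferInstanceAs (Module.Finite R R)) (inferInstanceAs (Module.Free R R))
    · intro W hW g
      have := h.finite W hW
      have h5 : Dep R m.succ W := (isMCM_iff hn W).1 (h3 W hW)
      have h6 : EP R W := EP.descend (S := S) (hG.ii _ h5.baseChange)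
      obtain ⟨φ, hφ⟩ := h6.lift hreg g
      exact ⟨φ, LinearMap.ext hφ⟩
  exact ⟨⟨h12, fun a => h31 (h23 a)⟩, ⟨fun a => h23 (h12 a), h31⟩⟩

end
end

/-- Over a henselian local complete intersection of positive dimension,
a resolving subcategory `𝒳` is not contravariantly infinite iff it contains no module of
finite positive projective dimension, iff all its members are maximal Cohen–Macaulay. -/
theorem stmt0 (R : Type u) [CommRing R] [IsNoetherianRing R] [IsLocalRing R]
    [HenselianLocalRing R] (hci : IsCompleteIntersection R) (hdim : 0 < ringKrullDim R)
    (𝒳 : Set (ModuleCat.{u} R)) (h𝒳 : IsResolving R 𝒳) :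
    (¬ ContravariantlyInfinite R 𝒳 ↔
      ¬ ∃ M ∈ 𝒳, (∃ n : ℕ, ProjDimLE R M n) ∧ ¬ ProjDimLE R M 0) ∧
    (¬ ContravariantlyInfinite R 𝒳 ↔ ∀ M ∈ 𝒳, IsMCM R M) := 
  main_thm R hci hdim 𝒳 h𝒳
end

section
/- Let R be a henselian Noetherian local ring and 𝒳 a resolving subcategory of the category of finitely generated R-modules. If 𝒳 is not contravariantly infinite (i.e. some finitely generated R-module outside 𝒳 admits a right 𝒳-approximation), then every module in 𝒳 of finite projective dimension is free; that is, 𝒳 ∩ fpd R = add R. -/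
open CategoryTheory IsLocalRing

universe u

theorem aux_pd (R : Type u) [CommRing R] (M : ModuleCat.{u} R) (n : ℕ) (h : ProjDimLE R M n) :
    HasProjectiveDimensionLT M (n + 1) := by
  let := HasExt.standard (ModuleCat.{u} R)
  rw [hasProjectiveDimensionLT_iff]
  intro i hi Y e
  obtain ⟨j, rfl⟩ : ∃ j, i = j + 1 := ⟨i - 1, by omega⟩
  let P := projectiveResolution M
  obtain ⟨f, hf, rfl⟩ := P.extMk_surjective e (j + 2) rfl
  rw [P.extMk_eq_zero_iff f (j+2) rfl hf j rfl]
  have h1 : Subsingleton (ExtMod R (j+1) M Y) := h Y (j+1) (by omega)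
  have h2 : Limits.IsZero (ExtMod R (j+1) M Y) := ModuleCat.isZero_of_subsingleton _
  have h3 := h2.of_iso (P.isoExt (R := R) (j+1) Y).symm
  rw [← HomologicalComplex.exactAt_iff_isZero_homology, HomologicalComplex.exactAt_iff' _ j (j+1) (j+2) (by simp) (by simp), ShortComplex.moduleCat_exact_iff] at h3
  obtain ⟨g, hg⟩ := h3 f hf
  exact ⟨g, hg⟩

theorem aux_ext_closed_pi (R : Type u) [CommRing R] (𝒳 : Set (ModuleCat.{u} R))
    (h𝒳 : IsResolving R 𝒳) (W : Type u) [AddCommGroup W] [Module R W]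
    (hW : ModuleCat.of R W ∈ 𝒳) (m : ℕ) : ModuleCat.of R (Fin m → W) ∈ 𝒳 := by
  induction m with
  | zero =>
    refine h𝒳.freeMem _ ?_ ?_
    · change Module.Finite R (Fin 0 → W); infer_instance
    · change Module.Free R (Fin 0 → W); infer_instance
  | succ m ih =>
    have : ModuleCat.of R (W × (Fin m → W)) ∈ 𝒳 := by
      refine h𝒳.extClosed (ModuleCat.of R W) _ (ModuleCat.of R (Fin m → W))
        (LinearMap.inl R W (Fin m → W)) (LinearMap.snd R W (Fin m → W)) ⟨?_, ?_, ?_⟩ hW ih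
      · exact LinearMap.inl_injective
      · exact Function.Exact.inl_snd
      · exact LinearMap.snd_surjective
    exact h𝒳.isoClosed this (Fin.consLinearEquiv R (fun _ : Fin (m+1) => W))

/-- minimal cover -/
theorem aux_cover (R : Type u) [CommRing R] [IsLocalRing R] (M : Type u) [AddCommGroup M]
    [Module R M] [Module.Finite R M] :
    ∃ (n : ℕ) (p : (Fin n → R) →ₗ[R] M), Function.Surjective p ∧
      LinearMap.ker p ≤ (maximalIdeal R) • (⊤ : Submodule R (Fin n → R)) := by
  classical
  let k := ResidueField R
  let b := Module.finBasis k (TensorProduct R k M)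
  have hs : Function.Surjective (TensorProduct.mk R k M 1) :=
    TensorProduct.mk_surjective R M k Ideal.Quotient.mk_surjective
  choose v hv using fun i => hs (b i)
  refine ⟨_, Fintype.linearCombination R v, ?_, ?_⟩
  · rw [← LinearMap.range_eq_top, Fintype.range_linearCombination]
    exact span_eq_top_of_tmul_eq_basis v b hv
  · intro x hx
    have h0 : ∑ i, (algebraMap R k (x i)) • b i = 0 := by
      have := congrArg (TensorProduct.mk R k M 1) (LinearMap.mem_ker.1 hx)
      simp only [Fintype.linearCombination_apply, map_sum, map_smul, map_zero, hv] at this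
      simpa [algebraMap_smul] using this
    have h1 := Fintype.linearIndependent_iff.1 b.linearIndependent _ h0
    rw [pi_eq_sum_univ' x]
    refine Submodule.sum_mem _ fun i _ => Submodule.smul_mem_smul ?_ trivial
    exact (IsLocalRing.residue_eq_zero_iff (x i)).1 (h1 i)

theorem aux_main (R : Type u) [CommRing R] [IsNoetherianRing R] [IsLocalRing R]
    (𝒳 : Set (ModuleCat.{u} R)) (h𝒳 : IsResolving R 𝒳)
    (X M Q P W : Type u) [AddCommGroup X] [Module R X] [AddCommGroup M] [Module R M]
    [AddCommGroup Q] [Module R Q] [AddCommGroup P] [Module R P] [AddCommGroup W] [Module R W]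
    (f : X →ₗ[R] M) (hX : ModuleCat.of R X ∈ 𝒳)
    (hf : ∀ (V : Type u) [AddCommGroup V] [Module R V], ModuleCat.of R V ∈ 𝒳 →
      ∀ g : V →ₗ[R] M, ∃ h : V →ₗ[R] X, f ∘ₗ h = g)
    (j : Q →ₗ[R] P) (π : P →ₗ[R] W) (hj : Function.Injective j) (hjπ : Function.Exact j π)
    (hπ : Function.Surjective π) (hW : ModuleCat.of R W ∈ 𝒳)
    (hjm : LinearMap.range j ≤ maximalIdeal R • (⊤ : Submodule R P))
    (α : Q →ₗ[R] LinearMap.ker f) (hα : Function.Surjective α) :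
    ModuleCat.of R M ∈ 𝒳 := by
  have : Module.Finite R X := h𝒳.finite _ hX
  have hfs : Function.Surjective f := by
    intro m
    have hU : ModuleCat.of R (ULift.{u} R) ∈ 𝒳 :=
      h𝒳.freeMem _ (inferInstanceAs (Module.Finite R (ULift.{u} R)))
        (inferInstanceAs (Module.Free R (ULift.{u} R)))
    obtain ⟨h, hh⟩ := hf (ULift.{u} R) hU
      ((LinearMap.toSpanSingleton R M m) ∘ₗ (ULift.moduleEquiv : ULift.{u} R ≃ₗ[R] R).toLinearMap)
    refine ⟨h ⟨1⟩, ?_⟩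
    have := LinearMap.congr_fun hh ⟨1⟩
    simpa using this
  let d : Q →ₗ[R] X × P := LinearMap.prod ((LinearMap.ker f).subtype ∘ₗ α) (-j)
  let N := LinearMap.range d
  let q : X × P →ₗ[R] (X × P) ⧸ N := N.mkQ
  have hqd : ∀ z, q (d z) = 0 := fun z =>
    (Submodule.Quotient.mk_eq_zero N).2 ⟨z, rfl⟩
  have hπj : ∀ z, π (j z) = 0 := fun z => (hjπ (j z)).2 ⟨z, rfl⟩
  let i : X →ₗ[R] (X × P) ⧸ N := q ∘ₗ LinearMap.inl R X P
  let pr : ((X × P) ⧸ N) →ₗ[R] W := N.liftQ (π ∘ₗ LinearMap.snd R X P) (by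
    rintro _ ⟨z, rfl⟩
    simp [d, hπj])
  let f' : ((X × P) ⧸ N) →ₗ[R] M := N.liftQ (f ∘ₗ LinearMap.fst R X P) (by
    rintro _ ⟨z, rfl⟩
    simp [d])
  have hE : ModuleCat.of R ((X × P) ⧸ N) ∈ 𝒳 := by
    refine h𝒳.extClosed (ModuleCat.of R X) _ (ModuleCat.of R W) i pr ⟨?_, ?_, ?_⟩ hX hW
    · refine (injective_iff_map_eq_zero i).2 fun x hx => ?_
      obtain ⟨z, hz⟩ := (Submodule.Quotient.mk_eq_zero N).1 hx
      have hz2 : -(j z) = 0 := congrArg Prod.snd hz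
      have hz1 : ((α z : LinearMap.ker f) : X) = x := congrArg Prod.fst hz
      have : z = 0 := hj (by simpa using hz2)
      rw [← hz1, this]; simp
    · intro y
      constructor
      · intro hy
        obtain ⟨⟨x, p⟩, rfl⟩ := N.mkQ_surjective y
        have hp : π p = 0 := hy
        obtain ⟨z, rfl⟩ := (hjπ p).1 hp
        refine ⟨x + α z, ?_⟩
        change q (x + α z, 0) = q (x, j z)
        rw [← sub_eq_zero, ← map_sub, ← hqd z]
        congr 1
        simp [d]
      · rintro ⟨x, rfl⟩
        change π 0 = 0
        simp
    · intro w
      obtain ⟨p, rfl⟩ := hπ w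
      exact ⟨q (0, p), rfl⟩
  obtain ⟨h, hh⟩ := hf _ hE f'
  have hh' : ∀ x p, f (h (q (x, p))) = f x := fun x p => LinearMap.congr_fun hh (q (x, p))
  let φ : P →ₗ[R] LinearMap.ker f :=
    LinearMap.codRestrict _ (h ∘ₗ q ∘ₗ LinearMap.inr R X P) (fun p => by
      simpa using hh' 0 p)
  let u : X →ₗ[R] LinearMap.ker f :=
    LinearMap.codRestrict _ (LinearMap.id - h ∘ₗ q ∘ₗ LinearMap.inl R X P) (fun x => by
      simp [hh'])
  let v := u ∘ₗ (LinearMap.ker f).subtype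
  have key : ∀ z, α z = v (α z) + φ (j z) := by
    intro z
    apply Subtype.ext
    have h1 : h (q (d z)) = 0 := by rw [hqd, map_zero]
    have h2 : d z = ((α z : X), 0) - (0, j z) := by simp [d]
    rw [h2, map_sub, map_sub, sub_eq_zero] at h1
    change (α z : X) = ((α z : X) - h (q ((α z : X), 0))) + h (q (0, j z))
    rw [h1]; abel
  have hv : Function.Surjective v := by
    rw [← LinearMap.range_eq_top, eq_top_iff]
    refine Submodule.le_of_le_smul_of_le_jacobson_bot (I := maximalIdeal R)
      Module.Finite.fg_top (IsLocalRing.maximalIdeal_le_jacobson _) ?_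
    intro y _
    obtain ⟨z, rfl⟩ := hα y
    rw [key z]
    refine Submodule.add_mem_sup ⟨_, rfl⟩ ?_
    have h3 : φ (j z) ∈ (maximalIdeal R • (⊤ : Submodule R P)).map φ :=
      ⟨_, hjm ⟨z, rfl⟩, rfl⟩
    rw [Submodule.map_smul''] at h3
    exact Submodule.smul_mono le_rfl le_top h3
  have hvi : Function.Injective v := IsNoetherian.injective_of_surjective_endomorphism v hv
  let e := LinearEquiv.ofBijective v ⟨hvi, hv⟩
  let r : X →ₗ[R] LinearMap.ker f := e.symm.toLinearMap ∘ₗ u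
  have hr : ∀ y : LinearMap.ker f, r y = y := fun y => e.symm_apply_apply y
  have hb : Function.Bijective (f.prod r) := by
    constructor
    · refine (injective_iff_map_eq_zero _).2 fun x hx => ?_
      have h1 : f x = 0 := congrArg Prod.fst hx
      have h2 : r x = 0 := congrArg Prod.snd hx
      have h3 := hr ⟨x, h1⟩
      rw [h2] at h3
      exact (congrArg Subtype.val h3).symm
    · rintro ⟨m, y⟩
      obtain ⟨x, rfl⟩ := hfs m
      refine ⟨x - r x + y, ?_⟩
      simp [hr]
  exact h𝒳.summandClosed (ModuleCat.of R M) (ModuleCat.of R (LinearMap.ker f))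
    (h𝒳.isoClosed hX (LinearEquiv.ofBijective (f.prod r) hb))

theorem aux_free (R : Type u) [CommRing R] [IsNoetherianRing R] [IsLocalRing R]
    (𝒳 : Set (ModuleCat.{u} R)) (h𝒳 : IsResolving R 𝒳)
    (h : ¬ ContravariantlyInfinite R 𝒳) (n : ℕ) :
    ∀ M ∈ 𝒳, HasProjectiveDimensionLT M (n + 1) → Module.Free R M := by
  induction n with
  | zero =>
    intro M hM hp
    have := h𝒳.finite _ hM
    have h1 : Projective M := (projective_iff_hasProjectiveDimensionLT_one (X := M)).2 hp
    have : Module.Projective R M := (IsProjective.iff_projective M).2 h1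
    exact Module.free_of_flat_of_isLocalRing
  | succ n ih =>
    intro M hM hp
    have := h𝒳.finite _ hM
    obtain ⟨m, p, hps, hpk⟩ := aux_cover R M
    let K := LinearMap.ker p
    let S : ShortComplex (ModuleCat.{u} R) :=
      ShortComplex.mk (ModuleCat.ofHom K.subtype) (ModuleCat.ofHom p) (by
        ext x; exact x.2)
    have hex : Function.Exact K.subtype p := LinearMap.exact_subtype_ker_map p
    have hS : S.ShortExact :=
      { exact := by
          rw [ShortComplex.ShortExact.moduleCat_exact_iff_function_exact]; exact hex
        mono_f := (ModuleCat.mono_iff_injective _).2 K.injective_subtype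
        epi_g := (ModuleCat.epi_iff_surjective _).2 hps }
    have hF : ModuleCat.of R (Fin m → R) ∈ 𝒳 :=
      h𝒳.freeMem _ (inferInstanceAs (Module.Finite R (Fin m → R)))
        (inferInstanceAs (Module.Free R (Fin m → R)))
    have hK : ModuleCat.of R K ∈ 𝒳 :=
      h𝒳.kerClosed _ (ModuleCat.of R (Fin m → R)) M K.subtype p
        ⟨K.injective_subtype, hex, hps⟩ hF hM
    have hproj : Projective S.X₂ := by
      change Projective (ModuleCat.of R (Fin m → R))
      rw [← IsProjective.iff_projective]
      change Module.Projective R (Fin m → R)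
      infer_instance
    have hKp : HasProjectiveDimensionLT (ModuleCat.of R K) (n + 1) :=
      (hS.hasProjectiveDimensionLT_X₃_iff n hproj).1 hp
    have hKfree : Module.Free R K := ih _ hK hKp
    rcases subsingleton_or_nontrivial K with hK0 | hK1
    · have hbot : LinearMap.ker p = ⊥ := (Submodule.subsingleton_iff_eq_bot).1 hK0
      exact Module.Free.of_equiv (LinearEquiv.ofBijective p ⟨LinearMap.ker_eq_bot.1 hbot, hps⟩)
    · exfalso
      apply h
      rintro C hC hC' ⟨X, f, hX, hf⟩
      apply hC'
      have : Module.Finite R X := h𝒳.finite _ hX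
      -- a surjection K → R
      let b := Module.Free.chooseBasis R K
      have : Nonempty (Module.Free.ChooseBasisIndex R K) := b.index_nonempty
      let i0 : Module.Free.ChooseBasisIndex R K := Classical.arbitrary _
      obtain ⟨l, s, hs⟩ := Module.Finite.exists_fin' R (LinearMap.ker f)
      let α : (Fin l → K) →ₗ[R] LinearMap.ker f := s ∘ₗ (b.coord i0).compLeft (Fin l)
      have hα : Function.Surjective α := by
        refine hs.comp fun w => ⟨fun t => w t • b i0, ?_⟩
        ext t
        simp
      refine aux_main R 𝒳 h𝒳 X C (Fin l → K) (Fin l → Fin m → R) (Fin l → M) f hX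
        (fun V _ _ hV g => hf _ hV g) (K.subtype.compLeft (Fin l)) (p.compLeft (Fin l))
        ?_ ?_ ?_ (aux_ext_closed_pi R 𝒳 h𝒳 M hM l) ?_ α hα
      · intro x y hxy
        ext1 t
        exact K.injective_subtype (congrFun hxy t)
      · intro y
        constructor
        · intro hy
          exact ⟨fun t => ⟨y t, congrFun hy t⟩, rfl⟩
        · rintro ⟨x, rfl⟩
          ext1 t
          exact (x t).2
      · intro w
        choose y hy using fun t => hps (w t)
        exact ⟨y, funext hy⟩
      · rintro _ ⟨x, rfl⟩
        rw [← LinearMap.sum_single_apply (φ := fun _ : Fin l => Fin m → R)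
          ((K.subtype.compLeft (Fin l)) x)]
        refine Submodule.sum_mem _ fun t _ => ?_
        have h3 : LinearMap.single R (fun _ : Fin l => Fin m → R) t (x t) ∈
          (maximalIdeal R • (⊤ : Submodule R (Fin m → R))).map
            (LinearMap.single R (fun _ : Fin l => Fin m → R) t) := ⟨_, hpk (x t).2, rfl⟩
        rw [Submodule.map_smul''] at h3
        exact Submodule.smul_mono le_rfl le_top h3

/-- Over a henselian Noetherian local ring, if a resolving subcategory `𝒳`
is not contravariantly infinite, then every module in `𝒳` of finite projective dimension
is free; that is, `𝒳 ∩ fpd R = add R`. -/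
theorem stmt1 (R : Type u) [CommRing R] [IsNoetherianRing R] [IsLocalRing R]
    [HenselianLocalRing R] (𝒳 : Set (ModuleCat.{u} R)) (h𝒳 : IsResolving R 𝒳)
    (h : ¬ ContravariantlyInfinite R 𝒳) :
    (∀ M ∈ 𝒳, (∃ n : ℕ, ProjDimLE R M n) → Module.Free R M) ∧
    𝒳 ∩ {M : ModuleCat.{u} R | ∃ n : ℕ, ProjDimLE R M n} =
      {M : ModuleCat.{u} R | Module.Finite R M ∧ Module.Free R M} := by
  have key : ∀ M ∈ 𝒳, (∃ n : ℕ, ProjDimLE R M n) → Module.Free R M := by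
    rintro M hM ⟨n, hn⟩
    exact aux_free R 𝒳 h𝒳 h n M hM (aux_pd R M n hn)
  refine ⟨key, ?_⟩
  ext M
  constructor
  · rintro ⟨hM, hn⟩
    exact ⟨h𝒳.finite M hM, key M hM hn⟩
  · rintro ⟨hfin, hfree⟩
    refine ⟨h𝒳.freeMem M hfin hfree, 0, fun N i hi => ?_⟩
    obtain ⟨j, rfl⟩ : ∃ j, i = j + 1 := ⟨i - 1, by omega⟩
    have : Module.Projective R M := inferInstance
    have : Projective M := (IsProjective.iff_projective M).1 this
    exact ModuleCat.subsingleton_of_isZero (isZero_Ext_succ_of_projective M N j)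
end
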